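/- arXiv:1802.09490 — 4 statements merged into one kernel-verified Lean document; each statement's English description precedes it below -/
import Mathlib

section
/- Let Γ_1 and Γ_2 be two Fragile CPR games with identical players and resource characteristics, at tax rates t_1 and t_2 respectively, with t_1 > t_2 and both less than t̄. Then y^{t_1}_i ≤ y^{t_2}_i for every player i (with α_i ∈ (0,1] and k_i > 0). Moreover, if in addition the PNE utilizations satisfy x^{t_1}_NE > x^{t_2}_NE, then Supp(Γ_1) ⊆ Supp(Γ_2). -/
/-!
The second claim follows from the first: `x2_T < x1_T < y1 i ≤ y2 i`.

For the first claim, only a positive threshold `y1 i` matters. On `S_t`, for `x < 1`, the sign of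
the effective rate is that of `(r x - t) ^ α - k (1 + t) ^ α * p x / (1 - p x)`. The first term is
a concave increasing function of the concave function `r`, and `u / (1 - u)` is convex and
increasing, so this expression is concave in `x`. Hence the set of utilizations in `S_t ∩ [0,1)`
with positive effective rate is an interval (`effRate_pos_between`). Moreover raising the tax
strictly lowers the effective rate (`effRate_lt_of_tax_lt`), so the effective rate at tax `t2` is
positive at `y1 i`, and also at some point `z` left of `y2 i`: the maximizer for increasing `r`,
and `0` for decreasing `r`. If `y2 i < y1 i`, it would be positive at `y2 i`, where it vanishes.
-/

open Real Set

noncomputable section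

/-- Effective rate of return of a player with sensitivity `α` and loss aversion `k`,
at utilization `x` and tax rate `t`. -/
def effRate (p r : ℝ → ℝ) (α k x t : ℝ) : ℝ :=
  if 0 ≤ r x - t then
    (r x - t) ^ α * (1 - p x) - k * (1 + t) ^ α * p x
  else
    -(k * ((t - r x) ^ α * (1 - p x) + (1 + t) ^ α * p x))

/-- Partial derivative of the effective rate of return in the utilization. -/
def effRateDx (p r : ℝ → ℝ) (α k x t : ℝ) : ℝ :=
  deriv (fun z => effRate p r α k z t) x

/-- `g_i(x,t) = α_i f_i(x,t) / (−f_{i,x}(x,t))`. -/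
def gFun (p r : ℝ → ℝ) (α k x t : ℝ) : ℝ :=
  α * effRate p r α k x t / (-effRateDx p r α k x t)

/-- Standing assumptions on the failure probability `p`. -/
structure FailureProb (p : ℝ → ℝ) : Prop where
  convexOn : ConvexOn ℝ (Ico (0:ℝ) 1) p
  strictMonoOn : StrictMonoOn p (Ico (0:ℝ) 1)
  contDiffOn : ContDiffOn ℝ 1 p (Ico (0:ℝ) 1)
  eq_one : ∀ x : ℝ, 1 ≤ x → p x = 1
  mem_unit : ∀ x : ℝ, p x ∈ Icc (0:ℝ) 1

/-- Standing assumptions on the rate of return `r`. -/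
structure RateOfReturn (r : ℝ → ℝ) : Prop where
  concaveOn : ConcaveOn ℝ (Icc (0:ℝ) 1) r
  pos : ∀ x ∈ Icc (0:ℝ) 1, 0 < r x
  strictMonoOrAnti : StrictMonoOn r (Icc (0:ℝ) 1) ∨ StrictAntiOn r (Icc (0:ℝ) 1)
  contDiffOn : ContDiffOn ℝ 1 r (Icc (0:ℝ) 1)

/-- `S_t`: the set of utilizations `x ∈ [0,1]` with `r(x) − t ≥ 0`. -/
def St (r : ℝ → ℝ) (t : ℝ) : Set ℝ := {x | x ∈ Icc (0:ℝ) 1 ∧ 0 ≤ r x - t}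

/-- The maximal tax rate `t̄` of the game. -/
def tbar {ι : Type*} [Fintype ι] (p r : ℝ → ℝ) (α k : ι → ℝ) : ℝ :=
  sSup {t : ℝ | 0 ≤ t ∧ ∃ i : ι, ∃ x ∈ Icc (0:ℝ) 1, 0 < effRate p r (α i) (k i) x t}

/-- The maximal tax rate `t̄_i` of a single player. -/
def tbarI (p r : ℝ → ℝ) (α k : ℝ) : ℝ :=
  sSup {t : ℝ | 0 ≤ t ∧ ∃ x ∈ St r t, 0 < effRate p r α k x t}

/-- `a_t` for a strictly increasing rate of return. -/
def aT (r : ℝ → ℝ) (t : ℝ) : ℝ :=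
  if t ≤ r 0 then 0 else sInf {x | x ∈ Icc (0:ℝ) 1 ∧ r x = t}

/-- The threshold `y^t_i` for a strictly decreasing rate of return. -/
def yT (p r : ℝ → ℝ) (α k t : ℝ) : ℝ :=
  if effRate p r α k 0 t ≤ 0 then 0
  else sInf {x | x ∈ St r t ∧ effRate p r α k x t = 0}

/-- `ĝ_i(x,t)`, for a strictly decreasing rate of return. -/
def gHat (p r : ℝ → ℝ) (α k x t : ℝ) : ℝ :=
  if x < yT p r α k t then gFun p r α k x t else 0

/-- The function `q_i(x,t)` for strictly increasing rate of return. -/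
def qFun (p r : ℝ → ℝ) (α x t : ℝ) : ℝ :=
  deriv r x * (1 - p x) ^ 2 /
      ((r x + 1) * deriv p x - α * deriv r x * (1 - p x) * p x) *
    ((1 + t) / (r x - t)) ^ (1 - α)

/-- `b` is a best response of a player (parameters `α`, `k`) to the others' total
investment `xbar` at tax rate `t`. -/
def IsBestResponse (p r : ℝ → ℝ) (α k t xbar b : ℝ) : Prop :=
  b ∈ Icc (0:ℝ) 1 ∧
    ∀ y ∈ Icc (0:ℝ) 1,
      y ^ α * effRate p r α k (y + xbar) t ≤ b ^ α * effRate p r α k (b + xbar) t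

/-- Pure Nash equilibrium of the Fragile CPR game at tax rate `t`. -/
def IsPNE {ι : Type*} [Fintype ι] [DecidableEq ι] (p r : ℝ → ℝ) (α k : ι → ℝ)
    (t : ℝ) (x : ι → ℝ) : Prop :=
  (∀ i, x i ∈ Icc (0:ℝ) 1) ∧
    ∀ i, ∀ y ∈ Icc (0:ℝ) 1,
      y ^ α i * effRate p r (α i) (k i) (y + ∑ j ∈ Finset.univ.erase i, x j) t ≤
        x i ^ α i * effRate p r (α i) (k i) (x i + ∑ j ∈ Finset.univ.erase i, x j) t

/-- `y` is the threshold `y^t_i` of a player, as defined in the paper for the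
increasing and decreasing cases of the rate of return. -/
def IsThresholdY (p r : ℝ → ℝ) (α k t y : ℝ) : Prop :=
  (StrictMonoOn r (Icc (0:ℝ) 1) →
    ((∀ x ∈ St r t, effRate p r α k x t ≤ 0) → y = 0) ∧
    ((∃ x ∈ St r t, 0 < effRate p r α k x t) →
      ∃ z ∈ St r t, IsMaxOn (fun x => effRate p r α k x t) (St r t) z ∧
        y ∈ Ioo z 1 ∧ effRate p r α k y t = 0)) ∧
  (StrictAntiOn r (Icc (0:ℝ) 1) →
    ((effRate p r α k 0 t ≤ 0) → y = 0) ∧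
    ((0 < effRate p r α k 0 t) → y ∈ St r t ∧ effRate p r α k y t = 0))

/-- Pure Nash equilibrium under player-specific tax sensitivities `γ_i`
(all players have `α = 1` and common loss aversion `k`). -/
def IsPNEgamma {ι : Type*} [Fintype ι] [DecidableEq ι] (p r : ℝ → ℝ) (k t : ℝ)
    (γ : ι → ℝ) (x : ι → ℝ) : Prop :=
  (∀ i, x i ∈ Icc (0:ℝ) 1) ∧
    ∀ i, ∀ y ∈ Icc (0:ℝ) 1,
      y * effRate p r 1 k (y + ∑ j ∈ Finset.univ.erase i, x j) (γ i * t) ≤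
        x i * effRate p r 1 k (x i + ∑ j ∈ Finset.univ.erase i, x j) (γ i * t)

theorem FailureProb.lt_one {p : ℝ → ℝ} (hp : FailureProb p) {x : ℝ} (h0 : 0 ≤ x) (h1 : x < 1) :
    p x < 1 :=
  lt_of_lt_of_le
    (hp.strictMonoOn (a := x) (b := (x + 1) / 2) ⟨h0, h1⟩ ⟨by linarith, by linarith⟩ (by linarith))
    (hp.mem_unit _).2

theorem mem_St_of_effRate_pos {p r : ℝ → ℝ} (hp : FailureProb p) {α k x t : ℝ} (hk : 0 < k)
    (ht : 0 ≤ t) (hx : x ∈ Icc (0:ℝ) 1) (h : 0 < effRate p r α k x t) : x ∈ St r t := by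
  refine ⟨hx, ?_⟩
  by_contra hc
  rw [effRate, if_neg hc] at h
  have hA : 0 ≤ (t - r x) ^ α := rpow_nonneg (by linarith) _
  have hC : 0 ≤ (1 + t) ^ α := rpow_nonneg (by linarith) _
  have h1 := mul_nonneg hA (sub_nonneg.2 (hp.mem_unit x).2)
  have h2 := mul_nonneg hC (hp.mem_unit x).1
  have h3 := mul_nonneg hk.le (add_nonneg h1 h2)
  linarith

theorem effRate_lt_of_tax_lt {p r : ℝ → ℝ} (hp : FailureProb p) {α k x t1 t2 : ℝ} (hα : 0 < α)
    (hk : 0 < k) (ht2 : 0 ≤ t2) (h21 : t2 < t1) (hx : x ∈ St r t1) (hx1 : x < 1) :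
    effRate p r α k x t1 < effRate p r α k x t2 := by
  obtain ⟨hx0, hr⟩ := hx
  rw [effRate, effRate, if_pos hr, if_pos (by linarith)]
  have hA : (r x - t1) ^ α < (r x - t2) ^ α := rpow_lt_rpow hr (by linarith) hα
  have hC : (1 + t2) ^ α ≤ (1 + t1) ^ α := rpow_le_rpow (by linarith) (by linarith) hα.le
  have h1 := mul_lt_mul_of_pos_right hA (sub_pos.2 (hp.lt_one hx0.1 hx1))
  have h2 := mul_le_mul_of_nonneg_right (mul_le_mul_of_nonneg_left hC hk.le) (hp.mem_unit x).1
  linarith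

/-- The convexity of `u ↦ u / (1 - u)` on `u < 1`, as a tangent-line bound at `P`, applied to a
point where `A * (1 - u) > c * u`. -/
theorem tangent_bound {A P u c : ℝ} (hc : 0 ≤ c) (hP : P < 1) (hu : u < 1)
    (h : c * u < A * (1 - u)) : c * (P * (1 - P) + (u - P)) < A * (1 - P) ^ 2 := by
  have h1 : 0 < 1 - u := by linarith
  have h2 : 0 < (1 - P) ^ 2 := pow_pos (by linarith) 2
  have h3 := mul_lt_mul_of_pos_right h h2
  -- `u (1 - P)² - (P (1 - P) + u - P) (1 - u) = (u - P)²`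
  have h4 := mul_nonneg hc (sq_nonneg (u - P))
  refine lt_of_mul_lt_mul_right (a := 1 - u) ?_ h1.le
  nlinarith

/-- The set of utilizations in `S_t ∩ [0,1)` with positive effective rate is order-convex. -/
theorem effRate_pos_between {p r : ℝ → ℝ} (hp : FailureProb p) (hr : RateOfReturn r)
    {α k t z y w : ℝ} (hα : α ∈ Ioc (0:ℝ) 1) (hk : 0 < k) (ht : 0 ≤ t)
    (hz : z ∈ St r t) (hw : w ∈ St r t) (hw1 : w < 1) (hzy : z < y) (hyw : y < w)
    (hfz : 0 < effRate p r α k z t) (hfw : 0 < effRate p r α k w t) :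
    0 < effRate p r α k y t := by
  obtain ⟨hz0, hrz⟩ := hz
  obtain ⟨hw0, hrw⟩ := hw
  have hzw : 0 < w - z := by linarith
  obtain ⟨a, b, ha, hb, hab, hy⟩ : ∃ a b : ℝ, 0 < a ∧ 0 < b ∧ a + b = 1 ∧ a * z + b * w = y :=
    ⟨(w - y) / (w - z), (y - z) / (w - z), div_pos (by linarith) hzw, div_pos (by linarith) hzw,
      by field_simp; ring, by field_simp; ring⟩
  have hrc := hr.concaveOn.2 hz0 hw0 ha.le hb.le hab
  have hpc := hp.convexOn.2 (x := z) (y := w) ⟨hz0.1, by linarith⟩ ⟨hw0.1, hw1⟩ ha.le hb.le hab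
  simp only [smul_eq_mul, hy] at hrc hpc
  have hbase : a * (r z - t) + b * (r w - t) ≤ r y - t := by
    have : a * (r z - t) + b * (r w - t) = a * r z + b * r w - (a + b) * t := by ring
    rw [this, hab]; linarith
  have hbase0 : 0 ≤ a * (r z - t) + b * (r w - t) :=
    add_nonneg (mul_nonneg ha.le hrz) (mul_nonneg hb.le hrw)
  have hA : a * (r z - t) ^ α + b * (r w - t) ^ α ≤ (r y - t) ^ α := by
    have h := (Real.concaveOn_rpow hα.1.le hα.2).2 (x := r z - t) (y := r w - t) hrz hrw
      ha.le hb.le hab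
    simp only [smul_eq_mul] at h
    exact h.trans (rpow_le_rpow hbase0 hbase hα.1.le)
  rw [effRate, if_pos hrz] at hfz
  rw [effRate, if_pos hrw] at hfw
  rw [effRate, if_pos (hbase0.trans hbase)]
  have hc : 0 < k * (1 + t) ^ α := mul_pos hk (rpow_pos_of_pos (by linarith) _)
  generalize k * (1 + t) ^ α = c at *
  have hP : p y < 1 := hp.lt_one (by linarith [hz0.1]) (by linarith)
  have hbz := tangent_bound hc.le hP (hp.lt_one hz0.1 (by linarith)) (sub_pos.1 hfz)
  have hbw := tangent_bound hc.le hP (hp.lt_one hw0.1 hw1) (sub_pos.1 hfw)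
  have hsum := add_lt_add (mul_lt_mul_of_pos_left hbz ha) (mul_lt_mul_of_pos_left hbw hb)
  have hA2 := mul_le_mul_of_nonneg_right hA (sq_nonneg (1 - p y))
  have hp2 := mul_le_mul_of_nonneg_left hpc hc.le
  have hb' : b = 1 - a := by linarith
  subst hb'
  have h1 : c * p y * (1 - p y) < (r y - t) ^ α * (1 - p y) * (1 - p y) := by nlinarith
  have := lt_of_mul_lt_mul_right h1 (by linarith)
  linarith

/-- A zero in `S_t1`, left of `1`, of the effective rate at the higher tax `t1` is at most any zero
at the lower tax `t2` that has, to its left, a point of `S_t2` with positive effective rate. -/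
theorem threshold_le_of_pos_left {p r : ℝ → ℝ} (hp : FailureProb p) (hr : RateOfReturn r)
    {α k t1 t2 z y1 y2 : ℝ} (hα : α ∈ Ioc (0:ℝ) 1) (hk : 0 < k) (ht2 : 0 ≤ t2) (h21 : t2 < t1)
    (hy1 : y1 ∈ St r t1) (hy11 : y1 < 1) (hf1 : effRate p r α k y1 t1 = 0)
    (hz : z ∈ St r t2) (hfz : 0 < effRate p r α k z t2) (hzy : z < y2)
    (hf2 : effRate p r α k y2 t2 = 0) : y1 ≤ y2 := by
  by_contra! hlt
  have hpos := effRate_lt_of_tax_lt (k := k) hp hα.1 hk ht2 h21 hy1 hy11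
  rw [hf1] at hpos
  exact (effRate_pos_between hp hr hα hk ht2 hz ⟨hy1.1, by linarith [hy1.2]⟩ hy11 hzy hlt hfz
    hpos).ne' hf2

theorem threshold_antitone {p r : ℝ → ℝ} (hp : FailureProb p) (hr : RateOfReturn r)
    {α k t1 t2 y1 y2 : ℝ} (hα : α ∈ Ioc (0:ℝ) 1) (hk : 0 < k) (ht2 : 0 ≤ t2) (h21 : t2 < t1)
    (hy1I : y1 ∈ Icc (0:ℝ) 1) (hy1 : IsThresholdY p r α k t1 y1)
    (hy2I : y2 ∈ Icc (0:ℝ) 1) (hy2 : IsThresholdY p r α k t2 y2) : y1 ≤ y2 := by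
  rcases hr.strictMonoOrAnti with hm | hm
  · obtain ⟨h10, h1p⟩ := hy1.1 hm
    by_cases hneg : ∀ x ∈ St r t1, effRate p r α k x t1 ≤ 0
    · rw [h10 hneg]; exact hy2I.1
    push Not at hneg
    obtain ⟨z1, hz1, hmax1, hyz1, hf1⟩ := h1p hneg
    obtain ⟨x, hx, hxpos⟩ := hneg
    have hfz1 : 0 < effRate p r α k z1 t1 := hxpos.trans_le (hmax1 hx)
    have hz1' : z1 ∈ St r t2 := ⟨hz1.1, by linarith [hz1.2]⟩
    have hfz12 := hfz1.trans
      (effRate_lt_of_tax_lt (k := k) hp hα.1 hk ht2 h21 hz1 (hyz1.1.trans hyz1.2))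
    obtain ⟨z2, hz2, hmax2, hyz2, hf2⟩ := (hy2.1 hm).2 ⟨z1, hz1', hfz12⟩
    have hy1S : y1 ∈ St r t1 := ⟨hy1I, by linarith [hz1.2, hm hz1.1 hy1I hyz1.1]⟩
    exact threshold_le_of_pos_left hp hr hα hk ht2 h21 hy1S hyz1.2 hf1 hz2
      (hfz12.trans_le (hmax2 hz1')) hyz2.1 hf2
  · obtain ⟨h10, h1p⟩ := hy1.2 hm
    rcases le_or_gt (effRate p r α k 0 t1) 0 with hneg | hpos
    · rw [h10 hneg]; exact hy2I.1
    obtain ⟨hy1S, hf1⟩ := h1p hpos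
    have h0S := mem_St_of_effRate_pos hp hk (ht2.trans h21.le) ⟨le_rfl, zero_le_one⟩ hpos
    have hpos2 := hpos.trans (effRate_lt_of_tax_lt hp hα.1 hk ht2 h21 h0S one_pos)
    obtain ⟨-, hf2⟩ := (hy2.2 hm).2 hpos2
    have hy11 : y1 < 1 := by
      refine lt_of_le_of_ne hy1I.2 fun h => ?_
      subst h
      rw [effRate, if_pos hy1S.2, hp.eq_one 1 le_rfl] at hf1
      have := mul_pos hk (rpow_pos_of_pos (show 0 < 1 + t1 by linarith) α)
      linarith
    have hy20 : 0 < y2 := by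
      refine lt_of_le_of_ne hy2I.1 fun h => ?_
      subst h
      exact hpos2.ne' hf2
    exact threshold_le_of_pos_left hp hr hα hk ht2 h21 hy1S hy11 hf1
      ⟨h0S.1, by linarith [h0S.2]⟩ hpos2 hy20 hf2

/-- if `t_1 > t_2`, then `y^{t_1}_i ≤ y^{t_2}_i` for every player,
and if moreover the PNE utilization at `t_1` exceeds that at `t_2`, then the
support of the PNE at `t_1` is contained in the support at `t_2`. -/
theorem statement4 {ι : Type*} [Fintype ι] [DecidableEq ι] [Nonempty ι]
    (p r : ℝ → ℝ) (α k : ι → ℝ)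
    (hp : FailureProb p) (hr : RateOfReturn r)
    (hα : ∀ i, α i ∈ Ioc (0:ℝ) 1) (hk : ∀ i, 0 < k i)
    (t1 t2 : ℝ) (ht2 : 0 ≤ t2) (h21 : t2 < t1) (h1 : t1 < tbar p r α k)
    (y1 y2 : ι → ℝ)
    (hy1 : ∀ i, y1 i ∈ Icc (0:ℝ) 1 ∧ IsThresholdY p r (α i) (k i) t1 (y1 i))
    (hy2 : ∀ i, y2 i ∈ Icc (0:ℝ) 1 ∧ IsThresholdY p r (α i) (k i) t2 (y2 i))
    (x1 x2 : ι → ℝ)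
    (hx1 : IsPNE p r α k t1 x1) (hx2 : IsPNE p r α k t2 x2) :
    (∀ i, y1 i ≤ y2 i) ∧
      (∑ i, x2 i < ∑ i, x1 i →
        {i : ι | ∑ j, x1 j < y1 i} ⊆ {i : ι | ∑ j, x2 j < y2 i}) := by
  have hle : ∀ i, y1 i ≤ y2 i := fun i =>
    threshold_antitone hp hr (hα i) (hk i) ht2 h21 (hy1 i).1 (hy1 i).2 (hy2 i).1 (hy2 i).2
  exact ⟨hle, fun hlt i hi => (hlt.trans hi).trans_le (hle i)⟩
end
end

section
/- Consider a Fragile CPR game with strictly increasing rate of return r, and let x ∈ I^t_i (so f_i(x,t) > 0 and f_{i,x}(x,t) < 0). Then the denominator of q_i(x,t) is positive; specifically, (r(x)+1)p'(x) > (r(x)−t)p'(x) > α_i r'(x)(1−p(x))p(x). -/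
/-!
Write `u = r x - t`, `K = k (1 + t) ^ α` and `A = u ^ (α - 1)`. Since `r` is strictly increasing and
`z ∈ S_t` lies to the left of `x`, `u > 0`; hence near `x` the effective rate of return is
`u ^ α (1 - p) - K p`, and its derivative is `α A r' (1 - p) - (A u + K) p'`.

As `r' ≥ 0`, negativity of this derivative forces `p' > 0`, which gives the second inequality because
`r x + 1 > r x - t`. Multiplying `α A r' (1 - p) < (A u + K) p'` by `p ≥ 0` and using
`K p < A u (1 - p)`, that is `f > 0`, gives `α A r' (1 - p) p < A u p'`; dividing by `A > 0` yields
the first inequality.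
-/

open Real Set

noncomputable section

/-- for a strictly increasing rate of return and `x ∈ I^t_i = (z^t_i, y^t_i)`
(so `f_i(x,t) > 0` and `f_{i,x}(x,t) < 0`), the denominator of `q_i(x,t)` is positive;
specifically `(r(x)+1)p'(x) > (r(x)−t)p'(x) > α_i r'(x)(1−p(x))p(x)`. -/
theorem statement7 (p r : ℝ → ℝ) (α k : ℝ)
    (hp : FailureProb p) (hr : RateOfReturn r)
    (hinc : StrictMonoOn r (Icc (0:ℝ) 1))
    (hα : α ∈ Ioc (0:ℝ) 1) (hk : 0 < k)
    (t : ℝ) (ht : 0 ≤ t) (z y x : ℝ)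
    (hz : z ∈ St r t ∧ IsMaxOn (fun s => effRate p r α k s t) (St r t) z)
    (hy : y ∈ Ioo z 1 ∧ effRate p r α k y t = 0)
    (hx : x ∈ Ioo z y)
    (hf : 0 < effRate p r α k x t)
    (hfx : effRateDx p r α k x t < 0) :
    α * deriv r x * (1 - p x) * p x < (r x - t) * deriv p x ∧
      (r x - t) * deriv p x < (r x + 1) * deriv p x := by
  obtain ⟨⟨⟨hz0, -⟩, hzt⟩, -⟩ := hz
  obtain ⟨⟨-, hy1⟩, -⟩ := hy
  have hx0 : 0 < x := lt_of_le_of_lt hz0 hx.1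
  have hx1 : x < 1 := hx.2.trans hy1
  have hu : 0 < r x - t := by
    have := hinc ⟨hz0, (hx.1.trans hx1).le⟩ ⟨hx0.le, hx1.le⟩ hx.1
    linarith
  have hIcc : Icc (0:ℝ) 1 ∈ nhds x := Icc_mem_nhds hx0 hx1
  have hpd : DifferentiableAt ℝ p x :=
    (hp.contDiffOn.contDiffAt (Ico_mem_nhds hx0 hx1)).differentiableAt (by norm_num)
  have hrd : DifferentiableAt ℝ r x :=
    (hr.contDiffOn.contDiffAt hIcc).differentiableAt (by norm_num)
  have hr_deriv : 0 ≤ deriv r x := by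
    rw [← derivWithin_of_mem_nhds hIcc]
    exact hinc.monotoneOn.derivWithin_nonneg
  obtain ⟨hp0, hp1⟩ := hp.mem_unit x
  have hK : 0 < k * (1 + t) ^ α := mul_pos hk (rpow_pos_of_pos (by linarith) _)
  -- The gain branch of `effRate` is in force near `x`, because `r x - t > 0` is an open condition.
  have heq : (fun s => effRate p r α k s t) =ᶠ[nhds x]
      fun s => (r s - t) ^ α * (1 - p s) - k * (1 + t) ^ α * p s := by
    have hc : ContinuousAt (fun s => r s - t) x := hrd.continuousAt.sub continuousAt_const
    filter_upwards [hc.eventually (lt_mem_nhds hu)] with s hs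
    exact if_pos hs.le
  have hd := (((hrd.hasDerivAt.sub_const t).rpow_const (p := α) (Or.inl hu.ne')).mul
    (hpd.hasDerivAt.const_sub 1)).sub (hpd.hasDerivAt.const_mul (k * (1 + t) ^ α))
  have hder : effRateDx p r α k x t = _ := heq.deriv_eq.trans hd.deriv
  rw [hder] at hfx
  rw [effRate, if_pos hu.le] at hf
  have hpow : (r x - t) ^ α = (r x - t) ^ (α - 1) * (r x - t) := by
    rw [← rpow_add_one hu.ne', sub_add_cancel]
  have hA : 0 < (r x - t) ^ (α - 1) := rpow_pos_of_pos hu _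
  rw [hpow] at hf hfx
  have hp_deriv : 0 < deriv p x := by
    have h1 : 0 ≤ α * (r x - t) ^ (α - 1) * deriv r x * (1 - p x) :=
      mul_nonneg (mul_nonneg (mul_nonneg hα.1.le hA.le) hr_deriv) (sub_nonneg.2 hp1)
    have h2 : 0 < ((r x - t) ^ (α - 1) * (r x - t) + k * (1 + t) ^ α) * deriv p x := by
      linarith
    exact (pos_iff_pos_of_mul_pos h2).1 (add_pos (mul_pos hA hu) hK)
  refine ⟨?_, mul_lt_mul_of_pos_right (by linarith) hp_deriv⟩
  -- `f * p' - p * f_x` is `(r x - t) ^ (α - 1)` times the difference of the two sides.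
  have h1 := mul_nonpos_of_nonneg_of_nonpos hp0 hfx.le
  have h2 := mul_pos hf hp_deriv
  refine lt_of_mul_lt_mul_left ?_ hA.le
  linarith
end
end

section
/- Consider a Fragile CPR game with strictly decreasing rate of return r. Then the utilization map x_NE : [0, t̄] → [0,1], t ↦ x^t_NE, is continuous on the entire closed interval [0, t̄], where x_NE(t̄) = 0. -/
/-!
Fix a player and write `u = (r - t)^α`, `v = 1 - p`, `c = k (1 + t)^α`. Where `t ≤ r x` the effective
rate of return is `f = (u + c) v - c`, and it is negative where `r x < t` or `1 ≤ x`; hence it is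
positive only where `t < r x` and `x < 1`.

At an equilibrium with total `S`, a player with `f(S) ≤ 0` invests nothing, and a player with
`f(S) > 0` invests a positive amount satisfying the first-order condition `x_i D(S) = α f(S)`, where
`D = -∂f/∂x` (`IsPNE.eq_zero`, `IsPNE.pos`, `IsPNE.eq_share`). So an equilibrium with `S > 0` satisfies
`S = F(S, t)`, where `F = ∑ share_i` and `share_i = α_i max(f_i, 0) / D_i`.

Two facts about `F` on `(0, 1)` suffice. It is antitone in `x` (`share_anti`), because `f` is
log-concave where positive: `D / f = (-u') (v / f) + p' ((u + c) / f)` is built from nonnegative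
nondecreasing factors. For fixed `x` it is continuous in `t` (`share_continuousAt`); the only delicate
tax rate is `t = r x`, and there `f = -c p(x) < 0`, so the share vanishes nearby.
If `X(t) < x < 1` then `F(x, t) < x`, which persists for nearby tax rates `s` and forces
`X(s) < x`; symmetrically from below. No continuity of `p` at `1` is needed.

At `t̄` no player has a positive rate of return anywhere, since positivity would persist at slightly
larger tax rates; hence all investments vanish.
-/

open Real Set

noncomputable section

open Filter Topology

/-! ### Regularity of `p` and `r` inside the unit interval -/

lemma FailureProb.hasDerivAt {p : ℝ → ℝ} (hp : FailureProb p) {x : ℝ} (hx : x ∈ Ioo (0:ℝ) 1) :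
    HasDerivAt p (deriv p x) x :=
  (((hp.contDiffOn.differentiableOn one_ne_zero) x ⟨hx.1.le, hx.2⟩).differentiableAt
    (Ico_mem_nhds hx.1 hx.2)).hasDerivAt

lemma RateOfReturn.hasDerivAt {r : ℝ → ℝ} (hr : RateOfReturn r) {x : ℝ} (hx : x ∈ Ioo (0:ℝ) 1) :
    HasDerivAt r (deriv r x) x :=
  (((hr.contDiffOn.differentiableOn one_ne_zero) x ⟨hx.1.le, hx.2.le⟩).differentiableAt
    (Icc_mem_nhds hx.1 hx.2)).hasDerivAt

lemma FailureProb.deriv_pos {p : ℝ → ℝ} (hp : FailureProb p) {x : ℝ} (hx : x ∈ Ioo (0:ℝ) 1) :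
    0 < deriv p x := by
  have h0 : (0:ℝ) ∈ Ico (0:ℝ) 1 := ⟨le_rfl, one_pos⟩
  have hx' : x ∈ Ico (0:ℝ) 1 := ⟨hx.1.le, hx.2⟩
  have h1 := hp.convexOn.slope_le_deriv h0 hx' hx.1 (hp.hasDerivAt hx).differentiableAt
  have h2 : 0 < slope p 0 x := by
    rw [slope_def_field]
    exact div_pos (sub_pos.2 (hp.strictMonoOn h0 hx' hx.1)) (sub_pos.2 hx.1)
  exact h2.trans_le h1

lemma RateOfReturn.deriv_neg {r : ℝ → ℝ} (hr : RateOfReturn r)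
    (hdec : StrictAntiOn r (Icc (0:ℝ) 1)) {x : ℝ} (hx : x ∈ Ioo (0:ℝ) 1) :
    deriv r x < 0 := by
  have h0 : (0:ℝ) ∈ Icc (0:ℝ) 1 := ⟨le_rfl, zero_le_one⟩
  have hx' : x ∈ Icc (0:ℝ) 1 := ⟨hx.1.le, hx.2.le⟩
  have h1 := hr.concaveOn.deriv_le_slope h0 hx' hx.1 (hr.hasDerivAt hx).differentiableAt
  have h2 : slope r 0 x < 0 := by
    rw [slope_def_field]
    exact div_neg_of_neg_of_pos (sub_neg.2 (hdec h0 hx' hx.1)) (sub_pos.2 hx.1)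
  exact h1.trans_lt h2

lemma FailureProb.deriv_mono {p : ℝ → ℝ} (hp : FailureProb p) {x y : ℝ} (hx : x ∈ Ioo (0:ℝ) 1)
    (hy : y ∈ Ioo (0:ℝ) 1) (hxy : x ≤ y) : deriv p x ≤ deriv p y :=
  (hp.convexOn.subset Ioo_subset_Ico_self (convex_Ioo 0 1)).monotoneOn_deriv
    (fun _ hz => (hp.hasDerivAt hz).differentiableAt) hx hy hxy

lemma RateOfReturn.deriv_anti {r : ℝ → ℝ} (hr : RateOfReturn r) {x y : ℝ} (hx : x ∈ Ioo (0:ℝ) 1)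
    (hy : y ∈ Ioo (0:ℝ) 1) (hxy : x ≤ y) : deriv r y ≤ deriv r x :=
  (hr.concaveOn.subset Ioo_subset_Icc_self (convex_Ioo 0 1)).antitoneOn_deriv
    (fun _ hz => (hr.hasDerivAt hz).differentiableAt) hx hy hxy

/-! ### Sign and monotonicity of the effective rate of return -/

lemma effRate_of_le {p r : ℝ → ℝ} {α k x t : ℝ} (h : t ≤ r x) :
    effRate p r α k x t =
      ((r x - t) ^ α + k * (1 + t) ^ α) * (1 - p x) - k * (1 + t) ^ α := by
  rw [effRate, if_pos (sub_nonneg.2 h)]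
  ring

lemma effRate_neg_of_lt {p r : ℝ → ℝ} (hp : FailureProb p) {α k x t : ℝ} (hk : 0 < k)
    (ht : 0 ≤ t) (h : r x < t) : effRate p r α k x t < 0 := by
  rw [effRate, if_neg (by linarith)]
  have h1 : 0 < (t - r x) ^ α := rpow_pos_of_pos (sub_pos.2 h) _
  have h2 : 0 < (1 + t) ^ α := rpow_pos_of_pos (by linarith) _
  obtain ⟨h3, h4⟩ := hp.mem_unit x
  have h5 : 0 < (t - r x) ^ α * (1 - p x) + (1 + t) ^ α * p x := by
    rcases h3.eq_or_lt with h | h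
    · rw [← h]; linarith
    · have := mul_nonneg h1.le (sub_nonneg.2 h4)
      have := mul_pos h2 h
      linarith
  have := mul_pos hk h5
  linarith

lemma effRate_neg_of_one_le {p r : ℝ → ℝ} (hp : FailureProb p) {α k x t : ℝ} (hk : 0 < k)
    (ht : 0 ≤ t) (h : 1 ≤ x) : effRate p r α k x t < 0 := by
  have := mul_pos hk (rpow_pos_of_pos (by linarith : 0 < 1 + t) α)
  rw [effRate, hp.eq_one x h]
  split_ifs <;> nlinarith

lemma lt_of_effRate_pos {p r : ℝ → ℝ} (hp : FailureProb p) {α k x t : ℝ} (hα : 0 < α) (hk : 0 < k)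
    (ht : 0 ≤ t) (h : 0 < effRate p r α k x t) : t < r x := by
  by_contra! hle
  rcases hle.lt_or_eq with hlt | heq
  · exact absurd (effRate_neg_of_lt (α := α) hp hk ht hlt) h.not_gt
  · rw [effRate_of_le heq.ge, heq, sub_self, zero_rpow hα.ne'] at h
    have := mul_nonneg (mul_pos hk (rpow_pos_of_pos (by linarith : 0 < 1 + t) α)).le
      (hp.mem_unit x).1
    linarith

lemma effRate_strictAnti {p r : ℝ → ℝ} (hp : FailureProb p)
    (hdec : StrictAntiOn r (Icc (0:ℝ) 1)) {α k a b t : ℝ} (hα : 0 < α) (hk : 0 < k) (ht : 0 ≤ t)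
    (ha : 0 ≤ a) (hab : a < b) (hb : b < 1) (h : t ≤ r b) :
    effRate p r α k b t < effRate p r α k a t := by
  have hr1 : r b < r a := hdec ⟨ha, by linarith⟩ ⟨by linarith, hb.le⟩ hab
  have hp1 : p a < p b := hp.strictMonoOn ⟨ha, by linarith⟩ ⟨by linarith, hb⟩ hab
  rw [effRate_of_le h, effRate_of_le (h.trans hr1.le)]
  have hc := mul_pos hk (rpow_pos_of_pos (by linarith : 0 < 1 + t) α)
  have hu : (r b - t) ^ α ≤ (r a - t) ^ α :=
    rpow_le_rpow (by linarith) (by linarith) hα.le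
  have hu0 : 0 ≤ (r b - t) ^ α := rpow_nonneg (by linarith) _
  have hb1 := (hp.mem_unit b).2
  nlinarith

/-! ### Equilibrium shares -/

/-- The negated partial derivative `-∂f/∂x` of the effective rate of return, in closed form; it
agrees with the derivative where `t < r x` and `0 < x < 1`. -/
def slopeD (p r : ℝ → ℝ) (α k x t : ℝ) : ℝ :=
  α * (r x - t) ^ (α - 1) * (-deriv r x) * (1 - p x)
    + deriv p x * ((r x - t) ^ α + k * (1 + t) ^ α)

/-- The investment of a player at an equilibrium with total investment `x`, as dictated by the
first-order condition; it is `0` when the effective rate of return is not positive. -/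
def share (p r : ℝ → ℝ) (α k x t : ℝ) : ℝ :=
  α * max (effRate p r α k x t) 0 / slopeD p r α k x t

lemma slopeD_pos {p r : ℝ → ℝ} (hp : FailureProb p) (hr : RateOfReturn r)
    (hdec : StrictAntiOn r (Icc (0:ℝ) 1)) {α k x t : ℝ} (hα : 0 < α) (hk : 0 < k) (ht : 0 ≤ t)
    (hx : x ∈ Ioo (0:ℝ) 1) (h : t < r x) : 0 < slopeD p r α k x t := by
  have hc := mul_pos hk (rpow_pos_of_pos (by linarith : 0 < 1 + t) α)
  have h1 : 0 < (r x - t) ^ (α - 1) := rpow_pos_of_pos (by linarith) _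
  have h2 : 0 < (r x - t) ^ α := rpow_pos_of_pos (by linarith) _
  have h3 := hr.deriv_neg hdec hx
  have h4 := hp.deriv_pos hx
  have h5 := (hp.mem_unit x).2
  have h6 : 0 ≤ α * (r x - t) ^ (α - 1) * (-deriv r x) * (1 - p x) :=
    mul_nonneg (mul_nonneg (by positivity) (by linarith)) (by linarith)
  have h7 : 0 < deriv p x * ((r x - t) ^ α + k * (1 + t) ^ α) := mul_pos h4 (by linarith)
  rw [slopeD]
  linarith

lemma effRate_hasDerivAt {p r : ℝ → ℝ} (hp : FailureProb p) (hr : RateOfReturn r) {α k x t : ℝ}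
    (hx : x ∈ Ioo (0:ℝ) 1) (h : t < r x) :
    HasDerivAt (fun z => effRate p r α k z t) (-slopeD p r α k x t) x := by
  have hrd := hr.hasDerivAt hx
  have hpd := hp.hasDerivAt hx
  have hu := (hrd.sub_const t).rpow_const (p := α) (Or.inl (by simpa using (sub_pos.2 h).ne'))
  have hf := ((hu.add_const (k * (1 + t) ^ α)).mul (hpd.const_sub 1)).sub_const (k * (1 + t) ^ α)
  have hev : ∀ᶠ z in 𝓝 x, t < r z := hrd.continuousAt.eventually_const_lt h
  refine (hf.congr_of_eventuallyEq ?_).congr_deriv ?_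
  · filter_upwards [hev] with z hz
    exact effRate_of_le hz.le
  · simp only [slopeD]
    ring

lemma share_eq_zero {p r : ℝ → ℝ} {α k x t : ℝ} (h : effRate p r α k x t ≤ 0) :
    share p r α k x t = 0 := by
  simp [share, max_eq_right h]

/-- The share is antitone in the utilization: the effective rate of return is log-concave where
it is positive. -/
lemma share_anti {p r : ℝ → ℝ} (hp : FailureProb p) (hr : RateOfReturn r)
    (hdec : StrictAntiOn r (Icc (0:ℝ) 1)) {α k x y t : ℝ} (hα : α ∈ Ioc (0:ℝ) 1) (hk : 0 < k)
    (ht : 0 ≤ t) (hx : x ∈ Ioo (0:ℝ) 1) (hy : y ∈ Ioo (0:ℝ) 1) (hxy : x ≤ y) :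
    share p r α k y t ≤ share p r α k x t := by
  have hα0 := hα.1
  rcases hxy.eq_or_lt with rfl | hlt
  · exact le_rfl
  have hrxy : r y < r x := hdec ⟨hx.1.le, hx.2.le⟩ ⟨hy.1.le, hy.2.le⟩ hlt
  rcases le_or_gt (effRate p r α k y t) 0 with h0 | h0
  · rw [share_eq_zero h0]
    rcases le_or_gt (effRate p r α k x t) 0 with h1 | h1
    · rw [share_eq_zero h1]
    · exact div_nonneg (mul_nonneg hα0.le (le_max_right _ _))
        (slopeD_pos hp hr hdec hα0 hk ht hx (lt_of_effRate_pos hp hα0 hk ht h1)).le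
  · have hty := lt_of_effRate_pos hp hα0 hk ht h0
    have htx := hty.trans hrxy
    have h1 : 0 < effRate p r α k x t :=
      h0.trans (effRate_strictAnti hp hdec hα0 hk ht hx.1.le hlt hy.2 hty.le)
    have hDx := slopeD_pos hp hr hdec hα0 hk ht hx htx
    have hDy := slopeD_pos hp hr hdec hα0 hk ht hy hty
    rw [share, share, max_eq_left h0.le, max_eq_left h1.le, div_le_div_iff₀ hDy hDx, mul_assoc,
      mul_assoc]
    refine mul_le_mul_of_nonneg_left ?_ hα0.le
    have hc := mul_pos hk (rpow_pos_of_pos (by linarith : 0 < 1 + t) α)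
    have hu : (r y - t) ^ α ≤ (r x - t) ^ α :=
      rpow_le_rpow (by linarith) (by linarith) hα0.le
    have huy : 0 < (r y - t) ^ α := rpow_pos_of_pos (by linarith) _
    have hw : (r x - t) ^ (α - 1) ≤ (r y - t) ^ (α - 1) :=
      rpow_le_rpow_of_nonpos (by linarith) (by linarith) (by linarith [hα.2])
    have hwx : 0 < (r x - t) ^ (α - 1) := rpow_pos_of_pos (by linarith) _
    have hv : 1 - p y ≤ 1 - p x := by
      have := hp.strictMonoOn ⟨hx.1.le, hx.2⟩ ⟨hy.1.le, hy.2⟩ hlt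
      linarith
    have hvy : 0 ≤ 1 - p y := sub_nonneg.2 (hp.mem_unit y).2
    have hrd := hr.deriv_anti hx hy hxy
    have hrx := hr.deriv_neg hdec hx
    have hpd := hp.deriv_mono hx hy hxy
    have hpx := hp.deriv_pos hx
    have hA : α * (r x - t) ^ (α - 1) * (-deriv r x) ≤ α * (r y - t) ^ (α - 1) * (-deriv r y) :=
      mul_le_mul (mul_le_mul_of_nonneg_left hw hα0.le) (by linarith) (by linarith)
        (mul_nonneg hα0.le (hwx.le.trans hw))
    have hA0 : 0 ≤ α * (r x - t) ^ (α - 1) * (-deriv r x) :=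
      mul_nonneg (mul_nonneg hα0.le hwx.le) (by linarith)
    rw [slopeD, slopeD]
    -- `v / f` and `(u + c) / f` are nondecreasing, in cross-multiplied form
    have key1 : effRate p r α k y t * (1 - p x) ≤ effRate p r α k x t * (1 - p y) := by
      rw [effRate_of_le hty.le, effRate_of_le htx.le]
      nlinarith [mul_nonneg (mul_nonneg (hvy.trans hv) hvy) (sub_nonneg.2 hu),
        mul_nonneg hc.le (sub_nonneg.2 hv)]
    have key2 : effRate p r α k y t * ((r x - t) ^ α + k * (1 + t) ^ α) ≤
        effRate p r α k x t * ((r y - t) ^ α + k * (1 + t) ^ α) := by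
      rw [effRate_of_le hty.le, effRate_of_le htx.le]
      nlinarith [mul_nonneg (mul_pos (add_pos (huy.trans_le hu) hc) (add_pos huy hc)).le
        (sub_nonneg.2 hv), mul_nonneg hc.le (sub_nonneg.2 hu)]
    have e1 := mul_le_mul hA key1 (mul_nonneg h0.le (hvy.trans hv)) (hA0.trans hA)
    have e2 := mul_le_mul hpd key2 (mul_nonneg h0.le (by linarith)) (hpx.le.trans hpd)
    linarith

lemma rpow_tax_continuousAt {α a t : ℝ} (hα : 0 < α) :
    ContinuousAt (fun s : ℝ => (a - s) ^ α) t :=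
  (continuousAt_const.sub continuousAt_id).rpow_const (Or.inr hα.le)

lemma effRate_formula_continuousAt (p r : ℝ → ℝ) {α : ℝ} (k x t : ℝ) (hα : 0 < α) :
    ContinuousAt (fun s => ((r x - s) ^ α + k * (1 + s) ^ α) * (1 - p x) - k * (1 + s) ^ α) t := by
  have h1 : ContinuousAt (fun s : ℝ => (1 + s) ^ α) t :=
    (continuousAt_const.add continuousAt_id).rpow_const (Or.inr hα.le)
  have h2 := rpow_tax_continuousAt (a := r x) (t := t) hα
  fun_prop

lemma effRate_continuousAt_tax (p : ℝ → ℝ) {r : ℝ → ℝ} {α x t : ℝ} (k : ℝ) (hα : 0 < α)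
    (h : t < r x) : ContinuousAt (fun s => effRate p r α k x s) t := by
  refine (effRate_formula_continuousAt p r k x t hα).congr ?_
  filter_upwards [eventually_lt_nhds h] with s hs
  exact (effRate_of_le hs.le).symm

lemma share_continuousAt {p r : ℝ → ℝ} (hp : FailureProb p) (hr : RateOfReturn r)
    (hdec : StrictAntiOn r (Icc (0:ℝ) 1)) {α k x t : ℝ} (hα : 0 < α) (hk : 0 < k)
    (ht : 0 ≤ t) (hx : x ∈ Ioo (0:ℝ) 1) : ContinuousAt (fun s => share p r α k x s) t := by
  rcases lt_or_ge t (r x) with h | h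
  · have hf := effRate_continuousAt_tax p k hα h
    have h1 : ContinuousAt (fun s : ℝ => (1 + s) ^ α) t :=
      (continuousAt_const.add continuousAt_id).rpow_const (Or.inr hα.le)
    have h2 := rpow_tax_continuousAt (a := r x) (t := t) hα
    have h3 : ContinuousAt (fun s : ℝ => (r x - s) ^ (α - 1)) t :=
      (continuousAt_const.sub continuousAt_id).rpow_const (Or.inl (sub_pos.2 h).ne')
    have hD : ContinuousAt (fun s => slopeD p r α k x s) t := by
      unfold slopeD
      fun_prop
    exact (continuousAt_const.mul (hf.max continuousAt_const)).div hD
      (slopeD_pos hp hr hdec hα hk ht hx h).ne'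
  · -- the effective rate of return is nonpositive at all tax rates near `t`
    suffices hev : ∀ᶠ s in 𝓝 t, effRate p r α k x s ≤ 0 by
      refine (continuousAt_const (y := (0:ℝ))).congr ?_
      filter_upwards [hev] with s hs
      exact (share_eq_zero hs).symm
    have hrx := hr.pos x ⟨hx.1.le, hx.2.le⟩
    have htpos : 0 < t := hrx.trans_le h
    have hle : ∀ s, 0 ≤ s → r x ≤ s → effRate p r α k x s ≤ 0 := fun s hs hrs =>
      not_lt.1 fun hpos => hrs.not_gt (lt_of_effRate_pos hp hα hk hs hpos)
    rcases h.lt_or_eq with h | h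
    · filter_upwards [eventually_gt_nhds h] with s hs
      exact hle s (hrx.trans hs).le hs.le
    · have hpx : 0 < p x := (hp.mem_unit 0).1.trans_lt
        (hp.strictMonoOn ⟨le_rfl, one_pos⟩ ⟨hx.1.le, hx.2⟩ hx.1)
      have hcont := effRate_formula_continuousAt p r k x t hα
      have hneg : ((r x - t) ^ α + k * (1 + t) ^ α) * (1 - p x) - k * (1 + t) ^ α < 0 := by
        rw [h, sub_self, zero_rpow hα.ne']
        have := mul_pos (mul_pos hk (rpow_pos_of_pos (by linarith : 0 < 1 + t) α)) hpx
        linarith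
      filter_upwards [hcont.eventually_lt_const hneg, eventually_gt_nhds htpos] with s hs hs0
      rcases le_total s (r x) with hsr | hsr
      · rw [effRate_of_le hsr]
        exact hs.le
      · exact hle s hs0.le hsr

/-! ### Equilibrium conditions -/

section Equilibrium

variable {ι : Type*} [Fintype ι] [DecidableEq ι] {p r : ℝ → ℝ} {α k : ι → ℝ} {t : ℝ} {x : ι → ℝ}

lemma IsPNE.sum_nonneg (h : IsPNE p r α k t x) : 0 ≤ ∑ i, x i :=
  Finset.sum_nonneg fun i _ => (h.1 i).1

lemma IsPNE.eq_zero (h : IsPNE p r α k t x) (hp : FailureProb p)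
    (hdec : StrictAntiOn r (Icc (0:ℝ) 1)) (hα : ∀ i, α i ∈ Ioc (0:ℝ) 1) (hk : ∀ i, 0 < k i)
    (ht : 0 ≤ t) {i : ι} (hf : effRate p r (α i) (k i) (∑ j, x j) t ≤ 0) : x i = 0 := by
  by_contra hne
  have hxi : 0 < x i := lt_of_le_of_ne (h.1 i).1 (Ne.symm hne)
  have hsum := Finset.add_sum_erase Finset.univ x (Finset.mem_univ i)
  have hbar : 0 ≤ ∑ j ∈ Finset.univ.erase i, x j := Finset.sum_nonneg fun j _ => (h.1 j).1
  have hbr := h.2 i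
  rw [hsum] at hbr
  set b := ∑ j ∈ Finset.univ.erase i, x j
  set S := ∑ j, x j
  have hpow := rpow_pos_of_pos hxi (α i)
  have h0 := hbr 0 ⟨le_rfl, zero_le_one⟩
  rw [zero_rpow (hα i).1.ne', zero_mul] at h0
  have hf0 : effRate p r (α i) (k i) S t = 0 := le_antisymm hf (nonneg_of_mul_nonneg_right h0 hpow)
  have hS1 : S < 1 := by
    by_contra! hS
    exact (effRate_neg_of_one_le (r := r) (α := α i) hp (hk i) ht hS).ne hf0
  have hrS : t ≤ r S := by
    by_contra! hS
    exact (effRate_neg_of_lt (α := α i) hp (hk i) ht hS).ne hf0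
  have h1 := hbr (x i / 2) ⟨by linarith, by linarith [(h.1 i).2]⟩
  have h2 := effRate_strictAnti hp hdec (hα i).1 (hk i) ht (by linarith : 0 ≤ x i / 2 + b)
    (by linarith : x i / 2 + b < S) hS1 hrS
  rw [hf0] at h1 h2
  have := mul_pos (rpow_pos_of_pos (half_pos hxi) (α i)) h2
  linarith

lemma IsPNE.pos (h : IsPNE p r α k t x) (hp : FailureProb p) (hr : RateOfReturn r)
    (hα : ∀ i, α i ∈ Ioc (0:ℝ) 1) (hk : ∀ i, 0 < k i)
    (ht : 0 ≤ t) {i : ι} (hf : 0 < effRate p r (α i) (k i) (∑ j, x j) t) : 0 < x i := by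
  by_contra hne
  have hxi : x i = 0 := le_antisymm (not_lt.1 hne) (h.1 i).1
  have hS0 := h.sum_nonneg
  have hsum := Finset.add_sum_erase Finset.univ x (Finset.mem_univ i)
  have hbr := h.2 i
  rw [hsum, hxi, zero_rpow (hα i).1.ne', zero_mul] at hbr
  rw [hxi, zero_add] at hsum
  rw [hsum] at hbr
  set S := ∑ j, x j
  have hS1 : S < 1 := by
    by_contra! hS
    exact (effRate_neg_of_one_le (r := r) (α := α i) hp (hk i) ht hS).not_gt hf
  have hrS := lt_of_effRate_pos hp (hα i).1 (hk i) ht hf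
  rw [effRate_of_le hrS.le] at hf
  have hrc : ContinuousWithinAt r (Ico 0 1) S :=
    (hr.contDiffOn.continuousOn S ⟨hS0, hS1.le⟩).mono Ico_subset_Icc_self
  have hpc : ContinuousWithinAt p (Ico 0 1) S := hp.contDiffOn.continuousOn S ⟨hS0, hS1⟩
  have huc : ContinuousWithinAt (fun z => (r z - t) ^ α i) (Ico 0 1) S :=
    (hrc.sub continuousWithinAt_const).rpow_const (Or.inr (hα i).1.le)
  have hfc : ContinuousWithinAt (fun z => ((r z - t) ^ α i + k i * (1 + t) ^ α i) * (1 - p z)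
      - k i * (1 + t) ^ α i) (Ico 0 1) S :=
    ((huc.add continuousWithinAt_const).mul (continuousWithinAt_const.sub hpc)).sub
      continuousWithinAt_const
  have hev := (hrc.eventually_const_lt hrS).and (hfc.eventually_const_lt hf)
  -- positivity of `f` persists slightly to the right of `S`
  have hle : 𝓝[>] S ≤ 𝓝[Ico 0 1] S := by
    rw [← nhdsWithin_Ioo_eq_nhdsGT hS1]
    exact nhdsWithin_mono _ fun z hz => ⟨hS0.trans hz.1.le, hz.2⟩
  obtain ⟨z, ⟨hz1, hz2⟩, hz3⟩ := ((hev.filter_mono hle).and (Ioo_mem_nhdsGT hS1)).exists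
  have h1 := hbr (z - S) ⟨by linarith [hz3.1], by linarith [hz3.2]⟩
  rw [sub_add_cancel, effRate_of_le hz1.le] at h1
  have := mul_pos (rpow_pos_of_pos (sub_pos.2 hz3.1) (α i)) hz2
  linarith

lemma IsPNE.lt_one (h : IsPNE p r α k t x) (hp : FailureProb p)
    (hdec : StrictAntiOn r (Icc (0:ℝ) 1)) (hα : ∀ i, α i ∈ Ioc (0:ℝ) 1) (hk : ∀ i, 0 < k i)
    (ht : 0 ≤ t) : ∑ i, x i < 1 := by
  by_contra! hS
  have : ∑ i, x i = 0 := Finset.sum_eq_zero fun i _ =>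
    h.eq_zero hp hdec hα hk ht (effRate_neg_of_one_le hp (hk i) ht hS).le
  linarith

/-- First-order condition at an equilibrium with positive total investment. -/
lemma IsPNE.eq_share (h : IsPNE p r α k t x) (hp : FailureProb p) (hr : RateOfReturn r)
    (hdec : StrictAntiOn r (Icc (0:ℝ) 1)) (hα : ∀ i, α i ∈ Ioc (0:ℝ) 1) (hk : ∀ i, 0 < k i)
    (ht : 0 ≤ t) (hS : 0 < ∑ j, x j) (i : ι) :
    x i = share p r (α i) (k i) (∑ j, x j) t := by
  rcases le_or_gt (effRate p r (α i) (k i) (∑ j, x j) t) 0 with hf | hf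
  · rw [share_eq_zero hf, h.eq_zero hp hdec hα hk ht hf]
  have hxi := h.pos hp hr hα hk ht hf
  have hS1 := h.lt_one hp hdec hα hk ht
  have hrS := lt_of_effRate_pos hp (hα i).1 (hk i) ht hf
  have hsum := Finset.add_sum_erase Finset.univ x (Finset.mem_univ i)
  have hbar : 0 ≤ ∑ j ∈ Finset.univ.erase i, x j := Finset.sum_nonneg fun j _ => (h.1 j).1
  have hbr := h.2 i
  have hD := slopeD_pos hp hr hdec (hα i).1 (hk i) ht ⟨hS, hS1⟩ hrS
  have hd := effRate_hasDerivAt (α := α i) (k := k i) hp hr ⟨hS, hS1⟩ hrS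
  set b := ∑ j ∈ Finset.univ.erase i, x j
  set S := ∑ j, x j
  rw [← hsum] at hd
  have hd2 := hd.comp_add_const (x i) b
  have hd3 := (hasDerivAt_rpow_const (p := α i) (Or.inl hxi.ne')).mul hd2
  have hmax : IsLocalMax (fun y => y ^ α i * effRate p r (α i) (k i) (y + b) t) (x i) := by
    filter_upwards [Icc_mem_nhds hxi (by linarith : x i < 1)] with y hy
    exact hbr y hy
  have hz := hmax.hasDerivAt_eq_zero hd3
  rw [hsum] at hz
  have hpow : x i ^ α i = x i ^ (α i - 1) * x i := by
    rw [rpow_sub_one hxi.ne', div_mul_cancel₀ _ hxi.ne']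
  have hq : 0 < x i ^ (α i - 1) := rpow_pos_of_pos hxi _
  rw [hpow] at hz
  have hz2 : x i ^ (α i - 1) *
      (α i * effRate p r (α i) (k i) S t - x i * slopeD p r (α i) (k i) S t) = 0 := by
    linarith
  have hz3 := (mul_eq_zero.1 hz2).resolve_left hq.ne'
  rw [share, max_eq_left hf.le, eq_div_iff hD.ne']
  linarith

end Equilibrium

/-- for a strictly decreasing rate of return, the utilization map
`t ↦ x^t_NE` is continuous on the whole closed interval `[0, t̄]`, with
`x_NE(t̄) = 0`. -/
theorem statement15 {ι : Type*} [Fintype ι] [DecidableEq ι] [Nonempty ι]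
    (p r : ℝ → ℝ) (α k : ι → ℝ)
    (hp : FailureProb p) (hr : RateOfReturn r)
    (hdec : StrictAntiOn r (Icc (0:ℝ) 1))
    (hα : ∀ i, α i ∈ Ioc (0:ℝ) 1) (hk : ∀ i, 0 < k i)
    (htbar : 0 < tbar p r α k)
    (X : ℝ → ℝ)
    (hX : ∀ t ∈ Icc (0:ℝ) (tbar p r α k),
      ∃ x : ι → ℝ, IsPNE p r α k t x ∧ ∑ i, x i = X t) :
    ContinuousOn X (Icc (0:ℝ) (tbar p r α k)) ∧ X (tbar p r α k) = 0 := by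
  have hX0 : ∀ t ∈ Icc (0:ℝ) (tbar p r α k), 0 ≤ X t := fun t ht => by
    obtain ⟨x, hx, hs⟩ := hX t ht
    exact hs ▸ hx.sum_nonneg
  have hX1 : ∀ t ∈ Icc (0:ℝ) (tbar p r α k), X t < 1 := fun t ht => by
    obtain ⟨x, hx, hs⟩ := hX t ht
    exact hs ▸ hx.lt_one hp hdec hα hk ht.1
  -- `X t` is a fixed point of the aggregate share when it is positive
  have hfix : ∀ t ∈ Icc (0:ℝ) (tbar p r α k), 0 < X t →
      ∑ i, share p r (α i) (k i) (X t) t = X t := fun t ht hpos => by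
    obtain ⟨x, hx, hs⟩ := hX t ht
    rw [← hs] at hpos ⊢
    exact Finset.sum_congr rfl fun i _ => (hx.eq_share hp hr hdec hα hk ht.1 hpos i).symm
  have hanti : ∀ t, 0 ≤ t → ∀ y ∈ Ioo (0:ℝ) 1, ∀ z ∈ Ioo (0:ℝ) 1, y ≤ z →
      ∑ i, share p r (α i) (k i) z t ≤ ∑ i, share p r (α i) (k i) y t :=
    fun t ht y hy z hz hyz => Finset.sum_le_sum fun i _ =>
      share_anti hp hr hdec (hα i) (hk i) ht hy hz hyz
  have hcont : ∀ t, 0 ≤ t → ∀ y ∈ Ioo (0:ℝ) 1,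
      ContinuousAt (fun s => ∑ i, share p r (α i) (k i) y s) t := fun t ht y hy =>
    tendsto_finsetSum _ fun i _ => share_continuousAt hp hr hdec (hα i).1 (hk i) ht hy
  -- if `X t = 0`, no player has a positive rate of return at `0`, so all shares vanish
  have hzero : ∀ t ∈ Icc (0:ℝ) (tbar p r α k), X t = 0 → ∀ y ∈ Ioo (0:ℝ) 1,
      ∑ i, share p r (α i) (k i) y t = 0 := fun t ht h0 y hy => by
    obtain ⟨x, hx, hsum⟩ := hX t ht
    refine Finset.sum_eq_zero fun i _ => share_eq_zero (not_lt.1 fun hpos => ?_)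
    have hry := lt_of_effRate_pos hp (hα i).1 (hk i) ht.1 hpos
    have h1 := hpos.trans
      (effRate_strictAnti hp hdec (hα i).1 (hk i) ht.1 le_rfl hy.1 hy.2 hry.le)
    have hS0 : ∑ j, x j = 0 := hsum.trans h0
    have h2 := hx.pos hp hr hα hk ht.1 (i := i) (by rwa [hS0])
    have h3 := (Finset.sum_eq_zero_iff_of_nonneg fun j _ => (hx.1 j).1).1 hS0 i
      (Finset.mem_univ i)
    exact h2.ne' h3
  constructor
  · intro t ht
    refine tendsto_order.2 ⟨fun a ha => ?_, fun a ha => ?_⟩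
    · rcases lt_or_ge a 0 with ha0 | ha0
      · filter_upwards [self_mem_nhdsWithin] with s hs
        exact ha0.trans_le (hX0 s hs)
      obtain ⟨y, hay, hyX⟩ := exists_between ha
      have hy : y ∈ Ioo (0:ℝ) 1 := ⟨ha0.trans_lt hay, hyX.trans (hX1 t ht)⟩
      have hXt : 0 < X t := hy.1.trans hyX
      have hFy : y < ∑ i, share p r (α i) (k i) y t :=
        (hyX.trans_eq (hfix t ht hXt).symm).trans_le
          (hanti t ht.1 y hy (X t) ⟨hXt, hX1 t ht⟩ hyX.le)
      filter_upwards [self_mem_nhdsWithin,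
        nhdsWithin_le_nhds ((hcont t ht.1 y hy).eventually_const_lt hFy)] with s hs hFs
      refine hay.trans_le ?_
      by_contra! hlt
      rcases (hX0 s hs).eq_or_lt with h0 | h0
      · rw [hzero s hs h0.symm y hy] at hFs
        linarith [hy.1]
      · have := hanti s hs.1 (X s) ⟨h0, hX1 s hs⟩ y hy hlt.le
        rw [hfix s hs h0] at this
        linarith
    · obtain ⟨y, hXy, hya⟩ := exists_between (lt_min ha (hX1 t ht))
      have hy : y ∈ Ioo (0:ℝ) 1 := ⟨(hX0 t ht).trans_lt hXy, hya.trans_le (min_le_right _ _)⟩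
      have hFy : ∑ i, share p r (α i) (k i) y t < y := by
        rcases (hX0 t ht).eq_or_lt with h0 | h0
        · rw [hzero t ht h0.symm y hy]
          exact hy.1
        · exact ((hanti t ht.1 (X t) ⟨h0, hX1 t ht⟩ y hy hXy.le).trans_eq
            (hfix t ht h0)).trans_lt hXy
      filter_upwards [self_mem_nhdsWithin,
        nhdsWithin_le_nhds ((hcont t ht.1 y hy).eventually_lt_const hFy)] with s hs hFs
      refine lt_of_lt_of_le ?_ (hya.le.trans (min_le_left _ _))
      by_contra! hle
      have h0 : 0 < X s := hy.1.trans_le hle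
      have := hanti s hs.1 y hy (X s) ⟨h0, hX1 s hs⟩ hle
      rw [hfix s hs h0] at this
      linarith
  · obtain ⟨x, hx, hsum⟩ := hX _ ⟨htbar.le, le_rfl⟩
    rw [← hsum]
    refine Finset.sum_eq_zero fun i _ => hx.eq_zero hp hdec hα hk htbar.le (not_lt.1 fun hpos => ?_)
    have hlt := lt_of_effRate_pos hp (hα i).1 (hk i) htbar.le hpos
    have hev := (effRate_continuousAt_tax p (k i) (hα i).1 hlt).eventually_const_lt hpos
    obtain ⟨s, hs, hgt⟩ :=
      ((hev.filter_mono nhdsWithin_le_nhds).and (self_mem_nhdsWithin (s := Ioi (tbar p r α k)))).exists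
    have hbdd : BddAbove {t : ℝ | 0 ≤ t ∧
        ∃ i : ι, ∃ x ∈ Icc (0:ℝ) 1, 0 < effRate p r (α i) (k i) x t} := by
      refine ⟨r 0, ?_⟩
      rintro t ⟨ht, j, z, hz, hf⟩
      exact (lt_of_effRate_pos hp (hα j).1 (hk j) ht hf).le.trans
        (hdec.antitoneOn ⟨le_rfl, zero_le_one⟩ hz hz.1)
    have hle : s ≤ tbar p r α k := le_csSup hbdd ⟨htbar.le.trans (le_of_lt hgt), i, _,
      ⟨hx.sum_nonneg, (hx.lt_one hp hdec hα hk htbar.le).le⟩, hs⟩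
    exact hle.not_gt hgt
end
end

section
/- Consider a Fragile CPR game with strictly increasing rate of return r. For each player i, let t̄_i = sup{t ≥ 0 : max_{x ∈ S_t} f_i(x,t) > 0}. Then the utilization map x_NE : [0, t̄) → [0,1], t ↦ x^t_NE, is continuous in t on the interval [0, min_{i∈N} t̄_i). -/
/-!
For fixed `t`, the effective rate of return is concave in the utilization on `S_t`: it is a
product of a concave increasing and a concave decreasing nonnegative function, minus a convex
function. Continuity of `t ↦ x^t_NE` follows from a closed-graph argument (limits of equilibria
are equilibria, and strategy profiles live in a compact set) together with uniqueness of the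
equilibrium utilization.

The failure probability may jump at `1`, and then the payoffs are not continuous there. So `p` is
replaced by the continuous extension `q` of `p|[0,1)` to `[0,1]`, and equilibria by
quasi-equilibria (`QuasiEq`): profiles of total at most `1` for the payoffs built from `q`, stable
under deviations that keep the total below `1`. Equilibria are quasi-equilibria because their
total is below `1`, and quasi-equilibria are closed under limits.

Uniqueness (`QuasiEq.total_le`) needs no first-order conditions. If two quasi-equilibria have
totals `A < B`, some player invests `a < b` in them. Multiply the inequalities stating that the
deviations `a + ε` and `b - ε` do not pay. Concavity gives `f A * f B ≤ f (A+ε) * f (B-ε)`, with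
positive right-hand side, while `a * b < (a+ε) * (b-ε)` for small `ε`; this is a contradiction.
The assumption `t < t̄_i` for every `i` enters through the existence of a point of `S_t` where
player `i` has positive rate of return, which places the smaller total in `S_t` and makes `f`
positive on `[A, B)`.
-/

open Real Set

noncomputable section

/-! ### Continuous extension of the failure probability -/

/-- The properties of the continuous extension of a failure probability to `[0,1]`. Its value at
`1` may be smaller than `1`. -/
structure IsRegularized (q : ℝ → ℝ) : Prop where
  cont : ContinuousOn q (Icc (0:ℝ) 1)
  conv : ConvexOn ℝ (Icc (0:ℝ) 1) q
  mono : MonotoneOn q (Icc (0:ℝ) 1)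
  mem : ∀ x ∈ Icc (0:ℝ) 1, q x ∈ Icc (0:ℝ) 1

theorem FailureProb.exists_regularized {p : ℝ → ℝ} (hp : FailureProb p) :
    ∃ q, IsRegularized q ∧ EqOn q p (Ico (0:ℝ) 1) := by
  set L := sSup (p '' Ioo (0:ℝ) 1) with hL
  have hlim : Filter.Tendsto p (nhdsWithin 1 (Iio 1)) (nhds L) := by
    apply MonotoneOn.tendsto_nhdsWithin_Ioo_left (nonempty_Ioo.2 one_pos)
    · exact hp.strictMonoOn.monotoneOn.mono Ioo_subset_Ico_self
    · refine ⟨1, ?_⟩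
      rintro _ ⟨x, -, rfl⟩
      exact (hp.mem_unit x).2
  set q := Function.update p 1 L with hq
  have heq : EqOn q p (Ico (0:ℝ) 1) := fun x hx => Function.update_of_ne hx.2.ne _ _
  have hcont : ContinuousOn q (Icc (0:ℝ) 1) := by
    have hpc : ContinuousOn p (Icc (0:ℝ) 1 \ {1}) := by
      rw [Icc_sdiff_right]; exact hp.contDiffOn.continuousOn
    rw [hq, continuousOn_update_iff]
    refine ⟨hpc, fun _ => ?_⟩
    rw [Icc_sdiff_right]
    exact hlim.mono_left (nhdsWithin_mono _ fun x hx => hx.2)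
  have hcl : closure (Ico (0:ℝ) 1) = Icc 0 1 := closure_Ico zero_ne_one
  have hcl2 : closure (Ico (0:ℝ) 1 ×ˢ Ico (0:ℝ) 1) = Icc 0 1 ×ˢ Icc 0 1 := by
    rw [closure_prod_eq, hcl]
  have hfst : ContinuousOn (fun z : ℝ × ℝ => q z.1) (Icc 0 1 ×ˢ Icc 0 1) :=
    hcont.comp continuousOn_fst fun z hz => hz.1
  have hsnd : ContinuousOn (fun z : ℝ × ℝ => q z.2) (Icc 0 1 ×ˢ Icc 0 1) :=
    hcont.comp continuousOn_snd fun z hz => hz.2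
  have hmem : ∀ x ∈ Icc (0:ℝ) 1, q x ∈ Icc (0:ℝ) 1 := by
    intro x hx
    rw [← hcl] at hx
    constructor
    · refine le_on_closure (f := fun _ => (0:ℝ)) (g := q) (s := Ico 0 1) ?_ continuousOn_const
        (by rwa [hcl]) hx
      intro y hy
      rw [heq hy]; exact (hp.mem_unit y).1
    · refine le_on_closure (g := fun _ => (1:ℝ)) (f := q) (s := Ico 0 1) ?_
        (by rwa [hcl]) continuousOn_const hx
      intro y hy
      rw [heq hy]; exact (hp.mem_unit y).2
  have hconv : ConvexOn ℝ (Icc (0:ℝ) 1) q := by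
    refine ⟨convex_Icc 0 1, ?_⟩
    intro x hx y hy a b ha hb hab
    have hcomb : ContinuousOn (fun z : ℝ × ℝ => q (a • z.1 + b • z.2))
        (Icc 0 1 ×ˢ Icc 0 1) := by
      refine hcont.comp (by fun_prop) ?_
      intro z hz
      exact convex_Icc (0:ℝ) 1 hz.1 hz.2 ha hb hab
    have hxy : (x, y) ∈ closure (Ico (0:ℝ) 1 ×ˢ Ico (0:ℝ) 1) := by
      rw [hcl2]; exact ⟨hx, hy⟩
    refine le_on_closure (f := fun z : ℝ × ℝ => q (a • z.1 + b • z.2))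
      (g := fun z : ℝ × ℝ => a • q z.1 + b • q z.2) ?_ (by rwa [hcl2]) ?_ hxy
    · intro z hz
      have h3 := convex_Ico (0:ℝ) 1 hz.1 hz.2 ha hb hab
      simp only [heq hz.1, heq hz.2, heq h3]
      exact hp.convexOn.2 hz.1 hz.2 ha hb hab
    · rw [hcl2]
      exact (hfst.const_smul a).add (hsnd.const_smul b)
  have hmono : MonotoneOn q (Icc (0:ℝ) 1) := by
    have key : ∀ x ∈ Ico (0:ℝ) 1, q x ≤ q 1 := by
      intro x hx
      have h1 : (1:ℝ) ∈ closure (Ico x 1) := by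
        rw [closure_Ico hx.2.ne]; exact ⟨hx.2.le, le_rfl⟩
      refine le_on_closure (f := fun _ => q x) (g := q) (s := Ico x 1) ?_ continuousOn_const ?_ h1
      · intro y hy
        have hy' : y ∈ Ico (0:ℝ) 1 := ⟨hx.1.trans hy.1, hy.2⟩
        rw [heq hx, heq hy']
        exact hp.strictMonoOn.monotoneOn hx hy' hy.1
      · rw [closure_Ico hx.2.ne]
        exact hcont.mono (Icc_subset_Icc_left hx.1)
    intro x hx y hy hxy
    rcases hy.2.lt_or_eq with h | rfl
    · have hx' : x ∈ Ico (0:ℝ) 1 := ⟨hx.1, hxy.trans_lt h⟩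
      have hy' : y ∈ Ico (0:ℝ) 1 := ⟨hy.1, h⟩
      rw [heq hx', heq hy']
      exact hp.strictMonoOn.monotoneOn hx' hy' hxy
    · rcases hx.2.lt_or_eq with h | rfl
      · exact key x ⟨hx.1, h⟩
      · exact le_rfl
  exact ⟨q, ⟨hcont, hconv, hmono, hmem⟩, heq⟩

/-! ### The effective rate of return -/

/-- One formula for both branches of `effRate`: the truncated powers vanish on the other branch
because `α ≠ 0`. -/
theorem effRate_eq_max (q r : ℝ → ℝ) {α : ℝ} (hα : 0 < α) (k x t : ℝ) :
    effRate q r α k x t = (max (r x - t) 0) ^ α * (1 - q x)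
      - k * ((max (t - r x) 0) ^ α * (1 - q x) + (1 + t) ^ α * q x) := by
  unfold effRate
  split_ifs with h
  · rw [max_eq_left h, max_eq_right (by linarith), Real.zero_rpow hα.ne']
    ring
  · push Not at h
    rw [max_eq_right h.le, max_eq_left (by linarith), Real.zero_rpow hα.ne']
    ring

theorem continuousOn_effRate {q r : ℝ → ℝ} (hq : ContinuousOn q (Icc (0:ℝ) 1))
    (hr : ContinuousOn r (Icc (0:ℝ) 1)) {α : ℝ} (hα : 0 < α) (k : ℝ) :
    ContinuousOn (fun z : ℝ × ℝ => effRate q r α k z.1 z.2) (Icc 0 1 ×ˢ univ) := by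
  have hq' : ContinuousOn (fun z : ℝ × ℝ => q z.1) (Icc 0 1 ×ˢ univ) :=
    hq.comp continuousOn_fst fun z hz => hz.1
  have hr' : ContinuousOn (fun z : ℝ × ℝ => r z.1) (Icc 0 1 ×ˢ univ) :=
    hr.comp continuousOn_fst fun z hz => hz.1
  simp only [effRate_eq_max q r hα]
  have hpow : ∀ {g : ℝ × ℝ → ℝ}, ContinuousOn g (Icc 0 1 ×ˢ univ) →
      ContinuousOn (fun z => g z ^ α) (Icc 0 1 ×ˢ univ) :=
    fun hg => hg.rpow_const fun _ _ => Or.inr hα.le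
  have hmax : ∀ {g : ℝ × ℝ → ℝ}, ContinuousOn g (Icc 0 1 ×ˢ univ) →
      ContinuousOn (fun z => max (g z) 0) (Icc 0 1 ×ˢ univ) :=
    fun hg => hg.sup continuousOn_const
  have h1 := hpow (hmax (hr'.sub continuousOn_snd))
  have h2 := hpow (hmax (continuousOn_snd.sub hr'))
  have h3 := hpow ((continuousOn_const (c := (1:ℝ))).add continuousOn_snd)
  have h4 := (continuousOn_const (c := (1:ℝ))).sub hq'
  exact (h1.mul h4).sub (continuousOn_const.mul ((h2.mul h4).add (h3.mul hq')))

theorem nonneg_of_effRate_pos {q r : ℝ → ℝ} {α k x t : ℝ} (hk : 0 < k) (ht : 0 ≤ t)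
    (hq : q x ∈ Icc (0:ℝ) 1) (h : 0 < effRate q r α k x t) : 0 ≤ r x - t := by
  by_contra hneg
  rw [effRate, if_neg hneg] at h
  have h1 : 0 ≤ (t - r x) ^ α := Real.rpow_nonneg (by linarith) _
  have h2 : 0 ≤ (1 + t) ^ α := Real.rpow_nonneg (by linarith) _
  have h3 := mul_nonneg hk.le
    (add_nonneg (mul_nonneg h1 (sub_nonneg.2 hq.2)) (mul_nonneg h2 hq.1))
  linarith

theorem effRate_neg_of_eq_one {p r : ℝ → ℝ} {α k x t : ℝ} (hk : 0 < k) (ht : 0 ≤ t)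
    (hp : p x = 1) : effRate p r α k x t < 0 := by
  have h2 : 0 < (1 + t) ^ α := Real.rpow_pos_of_pos (by linarith) _
  unfold effRate
  split_ifs <;> rw [hp] <;> nlinarith [mul_pos hk h2]

theorem effRate_congr {p q : ℝ → ℝ} {x : ℝ} (h : q x = p x) (r : ℝ → ℝ) (α k t : ℝ) :
    effRate q r α k x t = effRate p r α k x t := by
  simp only [effRate, h]

theorem concaveOn_effRate {q r : ℝ → ℝ} (hq : IsRegularized q)
    (hr : ConcaveOn ℝ (Icc (0:ℝ) 1) r) (hinc : StrictMonoOn r (Icc (0:ℝ) 1))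
    {α k t : ℝ} (hα : α ∈ Ioc (0:ℝ) 1) (hk : 0 < k) (ht : 0 ≤ t) :
    ConcaveOn ℝ (St r t) (fun x => effRate q r α k x t) := by
  have hconv : Convex ℝ (St r t) := by
    have := hr.convex_ge t
    convert this using 1
    ext x
    simp [St]
  have hsub : St r t ⊆ Icc 0 1 := fun x hx => hx.1
  have h1 : ConcaveOn ℝ (St r t) (fun x => (r x - t) ^ α) := by
    refine ⟨hconv, ?_⟩
    intro x hx y hy a b ha hb hab
    have hrc := hr.2 (hsub hx) (hsub hy) ha hb hab
    have hpow := (Real.concaveOn_rpow hα.1.le hα.2).2 (x := r x - t) (y := r y - t)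
      hx.2 hy.2 ha hb hab
    refine hpow.trans ?_
    simp only [smul_eq_mul] at hrc ⊢
    refine Real.rpow_le_rpow ?_ ?_ hα.1.le
    · exact add_nonneg (mul_nonneg ha hx.2) (mul_nonneg hb hy.2)
    · have : a * t + b * t = t := by rw [← add_mul, hab, one_mul]
      linarith
  have hqS : ConvexOn ℝ (St r t) q := hq.conv.subset hsub hconv
  have h2 : ConcaveOn ℝ (St r t) (fun x => 1 - q x) := (concaveOn_const 1 hconv).sub hqS
  have h3 : ConcaveOn ℝ (St r t) ((fun x => (r x - t) ^ α) * (fun x => 1 - q x)) := by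
    refine h1.mul h2 (fun x hx => Real.rpow_nonneg hx.2 _)
      (fun x hx => sub_nonneg.2 (hq.mem x hx.1).2) ?_
    intro x hx y hy hlt
    have hyx : y ≤ x := by
      by_contra! hxy
      have := hq.mono hx.1 hy.1 hxy.le
      linarith
    exact Real.rpow_le_rpow hy.2
      (by linarith [hinc.monotoneOn hy.1 hx.1 hyx]) hα.1.le
  have h4 : ConvexOn ℝ (St r t) (fun x => (k * (1 + t) ^ α) • q x) :=
    hqS.smul (mul_nonneg hk.le (Real.rpow_nonneg (by linarith) _))
  refine (h3.sub h4).congr ?_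
  intro x hx
  simp only [Pi.sub_apply, Pi.mul_apply, smul_eq_mul, effRate, if_pos hx.2]

/-- For `x ∈ S_t` the effective rate of return only increases when the tax decreases, so
positivity at a tax rate beyond `t` gives positivity at `t`. -/
theorem exists_effRate_pos {p r : ℝ → ℝ} (hp : FailureProb p) {α k t : ℝ} (hα : 0 < α)
    (hk : 0 < k) (ht : 0 ≤ t) (hlt : t < tbarI p r α k) :
    ∃ s, t < s ∧ ∃ z ∈ St r s, 0 < effRate p r α k z s ∧
      z ∈ St r t ∧ z < 1 ∧ 0 < effRate p r α k z t := by
  have hne : {t : ℝ | 0 ≤ t ∧ ∃ x ∈ St r t, 0 < effRate p r α k x t}.Nonempty := by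
    by_contra hemp
    rw [not_nonempty_iff_eq_empty] at hemp
    rw [tbarI, hemp, Real.sSup_empty] at hlt
    linarith
  obtain ⟨s, ⟨-, z, hz, hpos⟩, hts⟩ := exists_lt_of_lt_csSup hne hlt
  have hzt : 0 ≤ r z - t := by linarith [hz.2]
  have hpz := hp.mem_unit z
  have hpos_t : 0 < effRate p r α k z t := by
    refine hpos.trans_le ?_
    rw [effRate, effRate, if_pos hz.2, if_pos hzt]
    have h1 : (r z - s) ^ α ≤ (r z - t) ^ α := Real.rpow_le_rpow hz.2 (by linarith) hα.le
    have h2 : (1 + t) ^ α ≤ (1 + s) ^ α := Real.rpow_le_rpow (by linarith) (by linarith) hα.le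
    have h3 := mul_le_mul_of_nonneg_right h1 (sub_nonneg.2 hpz.2)
    have h4 := mul_le_mul_of_nonneg_right (mul_le_mul_of_nonneg_left h2 hk.le) hpz.1
    linarith
  refine ⟨s, hts, z, hz, hpos, ⟨hz.1, hzt⟩, ?_, hpos_t⟩
  by_contra! h1
  exact absurd hpos_t (effRate_neg_of_eq_one hk ht (hp.eq_one z h1)).le.not_gt

theorem lt_tbar {ι : Type*} [Fintype ι] {p r : ℝ → ℝ} {α k : ι → ℝ} (hp : FailureProb p)
    (hinc : StrictMonoOn r (Icc (0:ℝ) 1)) (hα : ∀ i, 0 < α i) (hk : ∀ i, 0 < k i) {t : ℝ}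
    (ht : 0 ≤ t) {i : ι} (hlt : t < tbarI p r (α i) (k i)) : t < tbar p r α k := by
  obtain ⟨s, hts, z, hz, hpos, -⟩ := exists_effRate_pos hp (hα i) (hk i) ht hlt
  refine hts.trans_le (le_csSup ?_ ⟨by linarith, i, z, hz.1, hpos⟩)
  refine ⟨r 1, ?_⟩
  rintro s ⟨hs, j, x, hx, hxpos⟩
  have h1 := nonneg_of_effRate_pos (hk j) hs (hp.mem_unit x) hxpos
  have h2 := hinc.monotoneOn hx (right_mem_Icc.2 zero_le_one) hx.2
  linarith

/-! ### Quasi-equilibria -/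

/-- A profile of total investment at most `1` such that no player gains, for the payoffs built
from `q`, by a deviation keeping the total below `1`. -/
structure QuasiEq {ι : Type*} [Fintype ι] (q r : ℝ → ℝ) (α k : ι → ℝ) (t : ℝ) (x : ι → ℝ) :
    Prop where
  mem : ∀ i, x i ∈ Icc (0:ℝ) 1
  total_le_one : ∑ i, x i ≤ 1
  stable : ∀ i, ∀ y ∈ Icc (0:ℝ) 1, y + (∑ j, x j - x i) < 1 →
    y ^ α i * effRate q r (α i) (k i) (y + (∑ j, x j - x i)) t ≤
      x i ^ α i * effRate q r (α i) (k i) (∑ j, x j) t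

theorem IsPNE.quasiEq {ι : Type*} [Fintype ι] [DecidableEq ι] {p q r : ℝ → ℝ} {α k : ι → ℝ}
    (hp : FailureProb p) (heq : EqOn q p (Ico (0:ℝ) 1)) (hα : ∀ i, 0 < α i) (hk : ∀ i, 0 < k i)
    {t : ℝ} (ht : 0 ≤ t) {x : ι → ℝ} (hx : IsPNE p r α k t x) : QuasiEq q r α k t x := by
  have herase : ∀ i, ∑ j ∈ Finset.univ.erase i, x j = ∑ j, x j - x i := by
    intro i
    rw [← Finset.add_sum_erase _ _ (Finset.mem_univ i)]; ring
  have hnn : ∀ i, 0 ≤ ∑ j, x j - x i := by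
    intro i
    rw [← herase]
    exact Finset.sum_nonneg fun j _ => (hx.1 j).1
  -- If the total is at least `1`, investing is strictly worse than staying out.
  have hlt : ∑ j, x j < 1 := by
    by_contra! h1
    have hzero : ∀ i, x i = 0 := by
      intro i
      by_contra hne
      have hpos : 0 < x i := lt_of_le_of_ne (hx.1 i).1 (Ne.symm hne)
      have h := hx.2 i 0 ⟨le_rfl, zero_le_one⟩
      rw [herase, Real.zero_rpow (hα i).ne', zero_mul, add_sub_cancel] at h
      have hneg := effRate_neg_of_eq_one (r := r) (α := α i) (hk i) ht (hp.eq_one _ h1)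
      have := mul_neg_of_pos_of_neg (Real.rpow_pos_of_pos hpos (α i)) hneg
      linarith
    simp only [hzero, Finset.sum_const_zero] at h1
    linarith
  refine ⟨hx.1, hlt.le, ?_⟩
  intro i y hy hy1
  have h := hx.2 i y hy
  rw [herase, add_sub_cancel] at h
  rw [effRate_congr (heq ⟨add_nonneg hy.1 (hnn i), hy1⟩),
    effRate_congr (heq ⟨Finset.sum_nonneg fun j _ => (hx.1 j).1, hlt⟩)]
  exact h

/-- Two points moved symmetrically towards each other do not decrease the product of the values
of a concave function that is nonnegative at the endpoints. -/
theorem ConcaveOn.mul_le_mul_inner {s : Set ℝ} {f : ℝ → ℝ} (hf : ConcaveOn ℝ s f) {A B ε : ℝ}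
    (hA : A ∈ s) (hB : B ∈ s) (hAB : A < B) (hε : 0 ≤ ε) (hεAB : ε ≤ B - A)
    (hfA : 0 ≤ f A) (hfB : 0 ≤ f B) : f A * f B ≤ f (A + ε) * f (B - ε) := by
  have hD : 0 < B - A := sub_pos.2 hAB
  obtain ⟨l, hl⟩ : ∃ l, l = ε / (B - A) := ⟨_, rfl⟩
  have hlD : l * (B - A) = ε := by rw [hl]; field_simp
  have hl0 : 0 ≤ l := by rw [hl]; positivity
  have hl1 : 0 ≤ 1 - l := by
    rw [hl, sub_nonneg, div_le_one hD]; exact hεAB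
  have h1 := hf.2 hA hB hl1 hl0 (by ring)
  have h2 := hf.2 hA hB hl0 hl1 (by ring)
  simp only [smul_eq_mul] at h1 h2
  rw [show (1 - l) * A + l * B = A + ε by rw [← hlD]; ring] at h1
  rw [show l * A + (1 - l) * B = B - ε by rw [← hlD]; ring] at h2
  have h3 : 0 ≤ l * f A + (1 - l) * f B :=
    add_nonneg (mul_nonneg hl0 hfA) (mul_nonneg hl1 hfB)
  have h4 : 0 ≤ (1 - l) * f A + l * f B :=
    add_nonneg (mul_nonneg hl1 hfA) (mul_nonneg hl0 hfB)
  refine le_trans ?_ (mul_le_mul h1 h2 h3 (h4.trans h1))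
  nlinarith [mul_nonneg (mul_nonneg hl0 hl1) (sq_nonneg (f A - f B))]

/-- The total investment of one quasi-equilibrium cannot exceed that of another one; by symmetry
all quasi-equilibria have the same total. -/
theorem QuasiEq.total_le {ι : Type*} [Fintype ι] {q r : ℝ → ℝ} {α k : ι → ℝ}
    (hq : IsRegularized q) (hr : ConcaveOn ℝ (Icc (0:ℝ) 1) r)
    (hinc : StrictMonoOn r (Icc (0:ℝ) 1)) (hα : ∀ i, α i ∈ Ioc (0:ℝ) 1) (hk : ∀ i, 0 < k i)
    {t : ℝ} (ht : 0 ≤ t)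
    (hz : ∀ i, ∃ z ∈ St r t, z < 1 ∧ 0 < effRate q r (α i) (k i) z t)
    {x y : ι → ℝ} (hx : QuasiEq q r α k t x) (hy : QuasiEq q r α k t y) :
    ∑ i, y i ≤ ∑ i, x i := by
  by_contra! hlt
  obtain ⟨i, hi⟩ : ∃ i, x i < y i := by
    by_contra! h
    exact absurd (Finset.sum_le_sum fun i _ => h i) (not_le.2 hlt)
  have hxsub : x i ≤ ∑ j, x j := Finset.single_le_sum (fun j _ => (hx.mem j).1) (Finset.mem_univ i)
  have hxst := hx.stable i
  have hyst := hy.stable i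
  have hB1 := hy.total_le_one
  set A := ∑ j, x j
  set B := ∑ j, y j
  have hxi := hx.mem i
  have hyi := hy.mem i
  have hconc := concaveOn_effRate hq hr hinc (hα i) (hk i) ht
  obtain ⟨z, hzS, hz1, hzpos⟩ := hz i
  set a := x i
  set b := y i
  set f := fun v => effRate q r (α i) (k i) v t with hf
  have hα0 := (hα i).1
  have hAI : A ∈ Icc (0:ℝ) 1 := ⟨hxi.1.trans hxsub, by linarith⟩
  have hBI : B ∈ Icc (0:ℝ) 1 := ⟨by linarith [hAI.1], hB1⟩
  obtain ⟨hAS, w, hwS, hwA, hwpos⟩ : A ∈ St r t ∧ ∃ w ∈ St r t, w ≤ A ∧ 0 < f w := by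
    rcases le_or_gt z A with h | h
    · refine ⟨⟨hAI, ?_⟩, z, hzS, h, hzpos⟩
      linarith [hzS.2, hinc.monotoneOn hzS.1 hAI h]
    · -- The deviation to `z - (A - a)` makes the total equal to `z`, where `f` is positive.
      have h1 := hxst (z - (A - a)) ⟨by linarith [hxi.1], by linarith⟩ (by linarith)
      rw [sub_add_cancel] at h1
      have h2 : 0 < (z - (A - a)) ^ α i := Real.rpow_pos_of_pos (by linarith [hxi.1]) _
      have h3 : 0 < a ^ α i * f A := (mul_pos h2 hzpos).trans_le h1
      have h4 : 0 < f A := pos_of_mul_pos_right h3 (Real.rpow_nonneg hxi.1 _)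
      have hAS : A ∈ St r t := ⟨hAI, nonneg_of_effRate_pos (hk i) ht (hq.mem A hAI) h4⟩
      exact ⟨hAS, A, hAS, le_rfl, h4⟩
  have hBS : B ∈ St r t := ⟨hBI, by linarith [hAS.2, hinc.monotoneOn hAI hBI hlt.le]⟩
  have hb0 : 0 < b := hxi.1.trans_lt hi
  have hfB : 0 ≤ f B := by
    have h := hyst 0 ⟨le_rfl, zero_le_one⟩ (by linarith)
    rw [Real.zero_rpow hα0.ne', zero_mul] at h
    exact nonneg_of_mul_nonneg_right h (Real.rpow_pos_of_pos hb0 _)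
  have hfpos : ∀ v, A ≤ v → v < B → 0 < f v := by
    intro v hAv hvB
    have hwB : 0 < B - w := by linarith
    have hv1 : 0 ≤ (B - v) / (B - w) := div_nonneg (by linarith) hwB.le
    have hv2 : 0 ≤ (v - w) / (B - w) := div_nonneg (by linarith) hwB.le
    have h := hconc.2 hwS hBS hv1 hv2 (by field_simp; ring)
    simp only [smul_eq_mul] at h
    rw [show (B - v) / (B - w) * w + (v - w) / (B - w) * B = v by field_simp; ring] at h
    have h1 : 0 < (B - v) / (B - w) * f w := mul_pos (div_pos (by linarith) hwB) hwpos
    have h2 : 0 ≤ (v - w) / (B - w) * f B :=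
      mul_nonneg hv2 hfB
    exact (by linarith : 0 < (B - v) / (B - w) * f w + (v - w) / (B - w) * f B).trans_le h
  obtain ⟨ε, hε0, hε⟩ : ∃ ε, 0 < ε ∧ ε < min (b - a) (B - A) :=
    exists_between (lt_min (by linarith) (by linarith))
  have hεab : ε < b - a := hε.trans_le (min_le_left _ _)
  have hεAB : ε < B - A := hε.trans_le (min_le_right _ _)
  have hxd := hxst (a + ε) ⟨by linarith [hxi.1], by linarith [hyi.2]⟩ (by linarith)
  have hyd := hyst (b - ε) ⟨by linarith [hxi.1], by linarith [hyi.2]⟩ (by linarith)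
  rw [show a + ε + (A - a) = A + ε by ring] at hxd
  rw [show b - ε + (B - b) = B - ε by ring] at hyd
  have hp1 := hfpos (A + ε) (by linarith) (by linarith)
  have hp2 := hfpos (B - ε) (by linarith) (by linarith)
  have hfA := hfpos A le_rfl hlt
  have hprod : f A * f B ≤ f (A + ε) * f (B - ε) :=
    hconc.mul_le_mul_inner hAS hBS hlt hε0.le hεAB.le hfA.le hfB
  have hae : 0 ≤ a + ε := by linarith [hxi.1]
  have hbe : 0 < b - ε := by linarith [hxi.1]
  have h1 : ((a + ε) ^ α i * f (A + ε)) * ((b - ε) ^ α i * f (B - ε)) ≤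
      (a ^ α i * f A) * (b ^ α i * f B) :=
    mul_le_mul hxd hyd (mul_nonneg (Real.rpow_nonneg hbe.le _) hp2.le)
      (mul_nonneg (Real.rpow_nonneg hxi.1 _) hfA.le)
  have h2 : (a * b) ^ α i < ((a + ε) * (b - ε)) ^ α i :=
    Real.rpow_lt_rpow (mul_nonneg hxi.1 hb0.le) (by nlinarith) hα0
  rw [Real.mul_rpow hxi.1 hb0.le, Real.mul_rpow hae hbe.le] at h2
  have h3 := mul_lt_mul_of_pos_right h2 (mul_pos hp1 hp2)
  have h4 := mul_le_mul_of_nonneg_left hprod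
    (mul_nonneg (Real.rpow_nonneg hxi.1 (α i)) (Real.rpow_nonneg hb0.le (α i)))
  linarith

/-- Quasi-equilibria have closed graph in the tax rate. -/
theorem QuasiEq.of_tendsto {ι β : Type*} [Fintype ι] {q r : ℝ → ℝ} {α k : ι → ℝ}
    (hq : ContinuousOn q (Icc (0:ℝ) 1)) (hr : ContinuousOn r (Icc (0:ℝ) 1))
    (hα : ∀ i, 0 < α i) {l : Filter β} [l.NeBot] {u : β → ℝ} {v : β → ι → ℝ} {t : ℝ} {x : ι → ℝ}
    (hu : Filter.Tendsto u l (nhds t)) (hv : Filter.Tendsto v l (nhds x))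
    (h : ∀ᶠ n in l, QuasiEq q r α k (u n) (v n)) : QuasiEq q r α k t x := by
  have hvi : ∀ i, Filter.Tendsto (fun n => v n i) l (nhds (x i)) := fun i =>
    (tendsto_pi_nhds.1 hv) i
  have hsum : Filter.Tendsto (fun n => ∑ i, v n i) l (nhds (∑ i, x i)) :=
    tendsto_finsetSum _ fun i _ => hvi i
  have hmem : ∀ i, x i ∈ Icc (0:ℝ) 1 := fun i =>
    isClosed_Icc.mem_of_tendsto (hvi i) (h.mono fun n hn => hn.mem i)
  have hle : ∑ i, x i ≤ 1 := le_of_tendsto hsum (h.mono fun n hn => hn.total_le_one)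
  have hsub : ∀ {w : ι → ℝ}, (∀ i, w i ∈ Icc (0:ℝ) 1) → ∀ i, w i ≤ ∑ j, w j := fun hw i =>
    Finset.single_le_sum (fun j _ => (hw j).1) (Finset.mem_univ i)
  have heff : ∀ i {c : β → ℝ} {d : ℝ}, Filter.Tendsto c l (nhds d) → d ∈ Icc (0:ℝ) 1 →
      (∀ᶠ n in l, c n ∈ Icc (0:ℝ) 1) →
      Filter.Tendsto (fun n => effRate q r (α i) (k i) (c n) (u n)) l
        (nhds (effRate q r (α i) (k i) d t)) := by
    intro i c d hc hd hcn
    have hcont := continuousOn_effRate hq hr (hα i) (k i) (d, t) ⟨hd, mem_univ _⟩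
    have hpair : Filter.Tendsto (fun n => (c n, u n)) l
        (nhdsWithin (d, t) (Icc (0:ℝ) 1 ×ˢ univ)) :=
      tendsto_nhdsWithin_iff.2 ⟨hc.prodMk_nhds hu, hcn.mono fun n hn => ⟨hn, mem_univ _⟩⟩
    exact hcont.tendsto.comp hpair
  refine ⟨hmem, hle, ?_⟩
  intro i y hy hy1
  have htot : Filter.Tendsto (fun n => y + (∑ j, v n j - v n i)) l
      (nhds (y + (∑ j, x j - x i))) := tendsto_const_nhds.add (hsum.sub (hvi i))
  have hev : ∀ᶠ n in l, y + (∑ j, v n j - v n i) < 1 := htot.eventually_lt_const hy1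
  have hL := heff i htot ⟨by linarith [hy.1, hsub hmem i], hy1.le⟩ (by
    filter_upwards [h, hev] with n hn hn1
    exact ⟨by linarith [hy.1, hsub hn.mem i], hn1.le⟩)
  have hR := heff i hsum ⟨(hmem i).1.trans (hsub hmem i), hle⟩ (by
    filter_upwards [h] with n hn
    exact ⟨(hn.mem i).1.trans (hsub hn.mem i), hn.total_le_one⟩)
  have hpow := (hvi i).rpow_const (p := α i) (Or.inr (hα i).le)
  refine le_of_tendsto_of_tendsto (hL.const_mul (y ^ α i)) (hpow.mul hR) ?_
  filter_upwards [h, hev] with n hn hn1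
  exact hn.stable i y hy hn1

/-! ### Continuity of the utilization -/

/-- for a strictly increasing rate of return, the utilization map
`t ↦ x^t_NE` is continuous on `[0, min_i t̄_i)`, where
`t̄_i = sup{t ≥ 0 : max_{x ∈ S_t} f_i(x,t) > 0}`. -/
theorem statement16 {ι : Type*} [Fintype ι] [DecidableEq ι] [Nonempty ι]
    (p r : ℝ → ℝ) (α k : ι → ℝ)
    (hp : FailureProb p) (hr : RateOfReturn r)
    (hinc : StrictMonoOn r (Icc (0:ℝ) 1))
    (hα : ∀ i, α i ∈ Ioc (0:ℝ) 1) (hk : ∀ i, 0 < k i)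
    (htbar : 0 < tbar p r α k)
    (X : ℝ → ℝ)
    (hX : ∀ t ∈ Ico (0:ℝ) (tbar p r α k),
      ∃ x : ι → ℝ, IsPNE p r α k t x ∧ ∑ i, x i = X t) :
    ContinuousOn X (Ico (0:ℝ) (⨅ i, tbarI p r (α i) (k i))) := by
  obtain ⟨q, hq, heq⟩ := hp.exists_regularized
  have hα0 : ∀ i, 0 < α i := fun i => (hα i).1
  set I := Ico (0:ℝ) (⨅ i, tbarI p r (α i) (k i)) with hI
  have hIlt : ∀ t ∈ I, ∀ i, t < tbarI p r (α i) (k i) := fun t ht i =>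
    ht.2.trans_le (ciInf_le (Set.finite_range _).bddBelow i)
  have hex : ∀ t, ∃ x : ι → ℝ, t ∈ I → QuasiEq q r α k t x ∧ ∑ i, x i = X t := by
    intro t
    by_cases ht : t ∈ I
    · obtain ⟨x, hx, hsum⟩ := hX t
        ⟨ht.1, lt_tbar hp hinc hα0 hk ht.1 (hIlt t ht (Classical.arbitrary ι))⟩
      exact ⟨x, fun _ => ⟨hx.quasiEq hp heq hα0 hk ht.1, hsum⟩⟩
    · exact ⟨0, fun h => absurd h ht⟩
  choose v hv using hex
  intro t ht
  refine (Filter.tendsto_iff_ultrafilter _ _ _).2 fun g hg => ?_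
  have hgI : I ∈ g := hg self_mem_nhdsWithin
  have hgt : Filter.Tendsto (fun s : ℝ => s) g (nhds t) := hg.trans nhdsWithin_le_nhds
  -- Profiles along the ultrafilter lie in the compact cube, hence converge.
  have hcube : IsCompact (Set.univ.pi fun _ : ι => Icc (0:ℝ) 1) :=
    isCompact_univ_pi fun _ => isCompact_Icc
  obtain ⟨x, -, hx⟩ := hcube.ultrafilter_le_nhds' (g.map v) (by
    rw [Ultrafilter.mem_map]
    exact Filter.mem_of_superset hgI fun s hs i _ => (hv s hs).1.mem i)
  have hvx : Filter.Tendsto v g (nhds x) := hx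
  have hquasi : QuasiEq q r α k t x :=
    QuasiEq.of_tendsto hq.cont hr.contDiffOn.continuousOn hα0 hgt hvx
      (Filter.mem_of_superset hgI fun s hs => (hv s hs).1)
  have hz : ∀ i, ∃ z ∈ St r t, z < 1 ∧ 0 < effRate q r (α i) (k i) z t := by
    intro i
    obtain ⟨-, -, z, -, -, hzS, hz1, hpos⟩ :=
      exists_effRate_pos hp (hα0 i) (hk i) ht.1 (hIlt t ht i)
    exact ⟨z, hzS, hz1, by rwa [effRate_congr (heq ⟨hzS.1.1, hz1⟩)]⟩
  have huniq : ∑ i, x i = X t := by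
    rw [← (hv t ht).2]
    exact le_antisymm
      (QuasiEq.total_le hq hr.concaveOn hinc hα hk ht.1 hz (hv t ht).1 hquasi)
      (QuasiEq.total_le hq hr.concaveOn hinc hα hk ht.1 hz hquasi (hv t ht).1)
  have hsum : Filter.Tendsto (fun s => ∑ i, v s i) g (nhds (X t)) := by
    rw [← huniq]
    exact tendsto_finsetSum _ fun i _ => (tendsto_pi_nhds.1 hvx) i
  exact hsum.congr' (Filter.mem_of_superset hgI fun s hs => (hv s hs).2)
end
end
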